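/- There exists an absolute positive constant c such that under the hypotheses of the tail bound for convex sets (d ≥ 2, s = d(d+3), N ≤ 1/(40π√d), V ⊂ E(s,N) convex with |E(4,N)|/|π(V)| ≤ δ for some δ ≥ 1), the average number of limit cycles satisfies (1/|V|) ∫_V C(v) dv ≤ c (log δ + log d), where integration is with respect to Lebesgue measure in the real affine hull of V. -/

import Mathlib

/-!
In polar coordinates the system reads `dr/dt = r P(t, r) / (1 + Q(t, r))`, where `t` is the angle and
`P`, `Q` are polynomials in `r` bounded by `‖v‖ √d` on the complex unit disk (`polSum_norm_le`).
Since this is at most `1 / (40 π)`, the equation makes sense for complex `r` with `‖r‖ ≤ 1`, and its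
return map `D` after one turn is holomorphic on the disk of radius `7/8` and close to the identity
(`flow_holo`). Every periodic orbit in `D_{1/2}` turns around the origin exactly once and gives a
positive fixed point `R 0 ≤ 1/2` of `D` (`periodic_polar`), hence a zero of
`g z = (D z - z) / z`.

On the circle of radius `3/4`, `g` is `O(N √d)`, while `g 0 = exp κ - 1` where `κ` is comparable to
the trace `τ = a₁₀ + b₀₁` of the linear part (`multiplier_real`). A Jensen-type inequality
(`zero_count`) gives `|τ| (3/2)^n ≤ 7 N √d` for `n` orbits (`count_finset`). Thus the number of limit
cycles of `v` is at most the number of `j ≥ 0` with `|τ(v)| ≤ 7 N √d (2/3)^j` (`limitCycleCount_le`).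

It remains to integrate: the average of the count over `V` is at most the sum over `j` of the
proportion of `V` lying in the slab `|τ| ≤ 7 N √d (2/3)^j`. If `p` is a point of the convex set `V`,
the slab `|τ| ≤ ε` occupies at most the proportion `2 (k + 1) ε / |τ(p)|` of `V` (`slab_measure`),
because suitable homotheties centred at `p` send it to disjoint subsets of `V`. Applied to the ball
`E(4, N)`, the same estimate turns the volume hypothesis into a point `p` of `V` with
`|τ(p)| > N / (40 δ)` (`exists_trace_large`). As `k = O(d²)`, all but `O(log δ + log d)` of the slabs
are under geometric control (`count_integral`), which gives the bound.
-/

open MeasureTheory Metric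
open scoped ENNReal NNReal Real

/-- Index set of coefficients: pairs `(i,k)` of nonnegative integers with `1 ≤ i+k ≤ d`. -/
def coeffIdx (d : ℕ) : Finset (ℕ × ℕ) :=
  (Finset.range (d + 1) ×ˢ Finset.range (d + 1)).filter
    fun p => 1 ≤ p.1 + p.2 ∧ p.1 + p.2 ≤ d

/-- The space `ℝ^s`, `s = d(d+3)`, of real coefficients `(a_{ki}, b_{ki})` of the pair of
polynomials `F, G` (the `inl` part indexes the `a`'s, the `inr` part the `b`'s). -/
abbrev CoefSpace (d : ℕ) := EuclideanSpace ℝ (↥(coeffIdx d) ⊕ ↥(coeffIdx d))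

/-- `F(x,y) = Σ_{1 ≤ i+k ≤ d} a_{ki} x^k y^i`, where the index pair is `p = (i,k)`. -/
noncomputable def Fpoly (d : ℕ) (v : CoefSpace d) (x y : ℝ) : ℝ :=
  ∑ p : ↥(coeffIdx d), v (Sum.inl p) * x ^ (p : ℕ × ℕ).2 * y ^ (p : ℕ × ℕ).1

/-- `G(x,y) = Σ_{1 ≤ i+k ≤ d} b_{ki} x^k y^i`. -/
noncomputable def Gpoly (d : ℕ) (v : CoefSpace d) (x y : ℝ) : ℝ :=
  ∑ p : ↥(coeffIdx d), v (Sum.inr p) * x ^ (p : ℕ × ℕ).2 * y ^ (p : ℕ × ℕ).1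

/-- The planar vector field `ẋ = -y + F(x,y)`, `ẏ = x + G(x,y)`. -/
noncomputable def vecField (d : ℕ) (v : CoefSpace d) (q : ℝ × ℝ) : ℝ × ℝ :=
  (-q.2 + Fpoly d v q.1 q.2, q.1 + Gpoly d v q.1 q.2)

/-- `Γ` is a (nonconstant) periodic orbit of the vector field `X`: the image of a
nonconstant periodic solution of `ẋ = X(x)`. -/
def IsPeriodicOrbit (X : ℝ × ℝ → ℝ × ℝ) (Γ : Set (ℝ × ℝ)) : Prop :=
  ∃ (sol : ℝ → ℝ × ℝ) (T : ℝ), 0 < T ∧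
    (∀ t, HasDerivAt sol (X (sol t)) t) ∧
    (∀ t, sol (t + T) = sol t) ∧
    (∃ t₁ t₂, sol t₁ ≠ sol t₂) ∧
    Γ = Set.range sol

/-- `Γ` is a limit cycle of `X`: a periodic orbit admitting an open neighbourhood that
meets no other periodic orbit. -/
def IsLimitCycle (X : ℝ × ℝ → ℝ × ℝ) (Γ : Set (ℝ × ℝ)) : Prop :=
  IsPeriodicOrbit X Γ ∧
    ∃ U : Set (ℝ × ℝ), IsOpen U ∧ Γ ⊆ U ∧
      ∀ Γ' : Set (ℝ × ℝ), IsPeriodicOrbit X Γ' → Γ' ≠ Γ → Γ' ∩ U = ∅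

/-- `C(v)`: the number of limit cycles of the vector field with coefficient vector `v`
contained in the closed disk `D_{1/2} = {x² + y² ≤ 1/4}` (valued in `ℝ≥0∞`). -/
noncomputable def limitCycleCount (d : ℕ) (v : CoefSpace d) : ℝ≥0∞ :=
  (({Γ : Set (ℝ × ℝ) | IsLimitCycle (vecField d v) Γ ∧
      Γ ⊆ {q : ℝ × ℝ | q.1 ^ 2 + q.2 ^ 2 ≤ 1 / 4}}).encard : ℕ∞)


/-- The natural projection `π : ℝ^s → ℝ⁴` sending a coefficient vector `v` to the
coefficients `(a₁₀, a₀₁, b₁₀, b₀₁)` of the linear parts of `F` and `G`. -/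
noncomputable def proj (d : ℕ) (v : CoefSpace d) : EuclideanSpace ℝ (Fin 4) :=
  if h : 1 ≤ d then
    (WithLp.equiv 2 (Fin 4 → ℝ)).symm
      ![v (Sum.inl ⟨(0, 1), by simp [coeffIdx]; omega⟩),
        v (Sum.inl ⟨(1, 0), by simp [coeffIdx]; omega⟩),
        v (Sum.inr ⟨(0, 1), by simp [coeffIdx]; omega⟩),
        v (Sum.inr ⟨(1, 0), by simp [coeffIdx]; omega⟩)]
  else 0

/-! ### Holomorphic dependence on the initial value -/

/-- Picard–Lindelöf on `[0, T]` for every initial value in a ball around `x₀`, keeping the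
information that the solution never leaves the closed ball of radius `a`. -/
theorem picard_mem {f : ℝ → ℂ → ℂ} {T : ℝ} {t₀ : Set.Icc (0:ℝ) T} {x₀ : ℂ} {a r L K : ℝ≥0}
    (hf : IsPicardLindelof f t₀ x₀ a r L K) {x : ℂ} (hx : x ∈ closedBall x₀ r) :
    ∃ α : ℝ → ℂ, α t₀ = x ∧
      (∀ t ∈ Set.Icc 0 T, HasDerivWithinAt α (f t (α t)) (Set.Icc 0 T) t) ∧
      ∀ t, α t ∈ closedBall x₀ a := by
  obtain ⟨α, hα⟩ := ODE.FunSpace.exists_isFixedPt_next hf hx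
  refine ⟨α.compProj, by rw [ODE.FunSpace.compProj_val, ← hα, ODE.FunSpace.next_apply₀],
    fun t ht ↦ ?_, fun t ↦ α.compProj_mem_closedBall hf.mul_max_le⟩
  apply ODE.hasDerivWithinAt_picard_Icc t₀.2 hf.continuousOn_uncurry
    α.continuous_compProj.continuousOn (fun _ ht' ↦ α.compProj_mem_closedBall hf.mul_max_le)
    x ht |>.congr_of_mem _ ht
  intro t' ht'
  nth_rw 1 [← hα]
  rw [ODE.FunSpace.compProj_of_mem ht', ODE.FunSpace.next_apply]

/-- The solution of the scalar equation `u' = a(t) u` is `u(t) = u(0) exp (∫ a)`. Continuity of `a`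
is only available on `[0, T]`, so `a` is first extended by constants. -/
theorem linear_ode {u a : ℝ → ℂ} {T : ℝ} (hT : 0 ≤ T)
    (ha : ContinuousOn a (Set.Icc 0 T))
    (hu : ∀ t ∈ Set.Icc 0 T, HasDerivWithinAt u (a t * u t) (Set.Icc 0 T) t) :
    u T = u 0 * Complex.exp (∫ t in (0:ℝ)..T, a t) := by
  set b : ℝ → ℂ := Set.IccExtend hT ((Set.Icc 0 T).domRestrict a) with hb
  have hbc : Continuous b := (continuousOn_iff_continuous_domRestrict.1 ha).Icc_extend'
  have hba : ∀ t ∈ Set.Icc 0 T, b t = a t := fun t ht => by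
    rw [hb, Set.IccExtend_of_mem hT _ ht]; rfl
  have h_ext : ∫ t in (0:ℝ)..T, a t = ∫ t in (0:ℝ)..T, b t := by
    apply intervalIntegral.integral_congr
    intro t ht
    rw [Set.uIcc_of_le hT] at ht
    exact (hba t ht).symm
  set B : ℝ → ℂ := fun t => ∫ s in (0:ℝ)..t, b s with hB
  have hBd : ∀ t, HasDerivAt B (b t) t := fun t =>
    intervalIntegral.integral_hasDerivAt_right (hbc.intervalIntegrable _ _)
      (hbc.stronglyMeasurableAtFilter _ _) hbc.continuousAt
  have hg : ∀ t ∈ Set.Icc 0 T, HasDerivWithinAt (fun t => u t * Complex.exp (-B t)) 0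
      (Set.Icc 0 T) t := by
    intro t ht
    have h := (hu t ht).mul ((hBd t).neg.cexp.hasDerivWithinAt (s := Set.Icc 0 T))
    refine h.congr_deriv ?_
    rw [hba t ht]; simp only [Pi.neg_apply]; ring
  have hc := constant_of_derivWithin_zero (f := fun t => u t * Complex.exp (-B t)) (a := 0) (b := T)
    (fun t ht => (hg t ht).differentiableWithinAt)
    (fun t ht => (hg t (Set.Ico_subset_Icc_self ht)).derivWithin
      (uniqueDiffOn_Icc (lt_of_le_of_lt ht.1 ht.2) t (Set.Ico_subset_Icc_self ht)))
    T ⟨hT, le_rfl⟩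
  have hB0 : B 0 = 0 := by simp [hB]
  simp only [hB0, neg_zero, Complex.exp_zero, mul_one] at hc
  rw [h_ext, ← hc, mul_assoc, ← Complex.exp_add]
  simp [hB]

/-- The time-`T` map `D` of a complex-analytic time-dependent scalar equation `z' = f(t, z)` fixing
`0` is holomorphic, its derivative at `0` is the exponential of the integrated linearization, and
it displaces points by at most `L * T`. The last clause says that `D` computes the end point of any
given solution staying in the closed unit disk.

For two solutions the difference `u = α z - α z₂` solves `u' = F(t) u` with `F` the slope of
`f t` between them, so `u(T) = (z - z₂) exp (∫ F)`; the limit `z → z₂` under the integral sign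
gives complex differentiability of the time-`T` map directly. -/
theorem flow_holo {f : ℝ → ℂ → ℂ} {T : ℝ} (hT : 0 ≤ T) {K L : ℝ≥0}
    (hlip : ∀ t ∈ Set.Icc 0 T, LipschitzOnWith K (f t) (closedBall 0 1))
    (hcont : ContinuousOn (fun p : ℝ × ℂ => f p.1 p.2) (Set.Icc 0 T ×ˢ closedBall 0 1))
    (hL : ∀ t ∈ Set.Icc 0 T, ∀ x ∈ closedBall (0:ℂ) 1, ‖f t x‖ ≤ L)
    (hLT : L * T ≤ 1 / 8)
    (hdiff : ∀ t ∈ Set.Icc 0 T, DifferentiableOn ℂ (f t) (ball 0 1))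
    (h0 : ∀ t, f t 0 = 0) :
    ∃ D : ℂ → ℂ, DifferentiableOn ℂ D (ball 0 (7 / 8)) ∧
      HasDerivAt D (Complex.exp (∫ t in (0:ℝ)..T, deriv (f t) 0)) 0 ∧
      (∀ z ∈ ball (0:ℂ) (7 / 8), ‖D z - z‖ ≤ L * T) ∧ D 0 = 0 ∧
      ∀ ρ : ℝ → ℂ, (∀ t ∈ Set.Icc 0 T, HasDerivWithinAt ρ (f t (ρ t)) (Set.Icc 0 T) t ∧
        ρ t ∈ closedBall 0 1) → ρ 0 ∈ ball 0 (7 / 8) → D (ρ 0) = ρ T := by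
  have hPL : IsPicardLindelof f (⟨0, le_rfl, hT⟩ : Set.Icc (0:ℝ) T) 0 1 (7 / 8) L K := by
    refine ⟨by simpa using hlip, ?_, by simpa using hL, ?_⟩
    · intro x hx
      exact hcont.comp (f := fun t : ℝ => (t, x)) (by fun_prop)
        (fun t ht => ⟨ht, by simpa using hx⟩)
    · simp only [sub_zero, sub_self, NNReal.coe_one]
      rw [max_eq_left hT]
      push_cast
      linarith
  have hex : ∀ z ∈ closedBall (0:ℂ) (7 / 8), ∃ α : ℝ → ℂ, α 0 = z ∧
      (∀ t ∈ Set.Icc 0 T, HasDerivWithinAt α (f t (α t)) (Set.Icc 0 T) t) ∧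
      ∀ t, α t ∈ closedBall (0:ℂ) 1 := by
    intro z hz
    simpa using picard_mem hPL (x := z) (by simpa using hz)
  choose! α hα0 hαd hαm using hex
  have hballs : ball (0:ℂ) (7/8) ⊆ closedBall 0 (7/8) := ball_subset_closedBall
  have toIci : ∀ {r : ℝ → ℂ} {t : ℝ} {r' : ℂ}, t ∈ Set.Ico 0 T →
      HasDerivWithinAt r r' (Set.Icc 0 T) t → HasDerivWithinAt r r' (Set.Ici t) t :=
    fun ht h => h.mono_of_mem_nhdsWithin (Icc_mem_nhdsGE_of_mem ht)
  have hαc : ∀ z ∈ closedBall (0:ℂ) (7 / 8), ContinuousOn (α z) (Set.Icc 0 T) := fun z hz t ht =>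
    (hαd z hz t ht).continuousWithinAt
  have hdisp : ∀ z ∈ closedBall (0:ℂ) (7 / 8), ∀ t ∈ Set.Icc 0 T, ‖α z t - z‖ ≤ L * T := by
    intro z hz t ht
    have := Convex.norm_image_sub_le_of_norm_hasDerivWithin_le (hαd z hz)
      (fun s hs => hL s hs _ (hαm z hz s)) (convex_Icc 0 T) (Set.left_mem_Icc.2 hT) ht
    rw [hα0 z hz] at this
    refine this.trans ?_
    gcongr
    rw [sub_zero, Real.norm_eq_abs, abs_of_nonneg ht.1]; exact ht.2
  have hball1 : ∀ z ∈ ball (0:ℂ) (7 / 8), ∀ t ∈ Set.Icc 0 T, α z t ∈ ball (0:ℂ) 1 := by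
    intro z hz t ht
    have h1 := hdisp z (hballs hz) t ht
    have h2 : ‖z‖ < 7 / 8 := by simpa using hz
    have h3 := norm_le_norm_add_norm_sub' (α z t) z
    simp only [mem_ball, dist_zero_right]
    linarith
  have hgron : ∀ z₁ ∈ closedBall (0:ℂ) (7 / 8), ∀ z₂ ∈ closedBall (0:ℂ) (7 / 8),
      ∀ t ∈ Set.Icc 0 T, dist (α z₁ t) (α z₂ t) ≤ dist z₁ z₂ * Real.exp (K * (t - 0)) := by
    intro z₁ h₁ z₂ h₂
    exact dist_le_of_trajectories_ODE_of_mem (v := f) (s := fun _ => closedBall 0 1) (K := K)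
      (fun t ht => hlip t (Set.Ico_subset_Icc_self ht))
      (hαc z₁ h₁) (fun t ht => toIci ht (hαd z₁ h₁ t (Set.Ico_subset_Icc_self ht)))
      (fun t _ => hαm z₁ h₁ t)
      (hαc z₂ h₂) (fun t ht => toIci ht (hαd z₂ h₂ t (Set.Ico_subset_Icc_self ht)))
      (fun t _ => hαm z₂ h₂ t) (by rw [hα0 z₁ h₁, hα0 z₂ h₂])
  have hinj : ∀ z₁ ∈ closedBall (0:ℂ) (7 / 8), ∀ z₂ ∈ closedBall (0:ℂ) (7 / 8),
      ∀ t ∈ Set.Icc 0 T, α z₁ t = α z₂ t → z₁ = z₂ := by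
    intro z₁ h₁ z₂ h₂ t ht he
    have hsub : Set.Icc 0 t ⊆ Set.Icc 0 T := Set.Icc_subset_Icc_right ht.2
    have toIic : ∀ {r : ℝ → ℂ} {s : ℝ} {r' : ℂ}, s ∈ Set.Ioc 0 t →
        HasDerivWithinAt r r' (Set.Icc 0 T) s → HasDerivWithinAt r r' (Set.Iic s) s :=
      fun hs h => h.mono_of_mem_nhdsWithin
        (Filter.mem_of_superset (Icc_mem_nhdsLE_of_mem hs) hsub)
    have := ODE_solution_unique_of_mem_Icc_left (v := f) (s := fun _ => closedBall 0 1) (K := K)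
      (fun s hs => hlip s (hsub (Set.Ioc_subset_Icc_self hs)))
      ((hαc z₁ h₁).mono hsub)
      (fun s hs => toIic hs (hαd z₁ h₁ s (hsub (Set.Ioc_subset_Icc_self hs))))
      (fun s _ => hαm z₁ h₁ s) ((hαc z₂ h₂).mono hsub)
      (fun s hs => toIic hs (hαd z₂ h₂ s (hsub (Set.Ioc_subset_Icc_self hs))))
      (fun s _ => hαm z₂ h₂ s) he (Set.left_mem_Icc.2 ht.1)
    rwa [hα0 z₁ h₁, hα0 z₂ h₂] at this
  have huniq : ∀ ρ : ℝ → ℂ, (∀ t ∈ Set.Icc 0 T, HasDerivWithinAt ρ (f t (ρ t)) (Set.Icc 0 T) t ∧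
        ρ t ∈ closedBall 0 1) → ρ 0 ∈ ball 0 (7 / 8) → Set.EqOn (α (ρ 0)) ρ (Set.Icc 0 T) := by
    intro ρ hρ hρ0
    have h₁ := hballs hρ0
    exact ODE_solution_unique_of_mem_Icc_right (v := f) (s := fun _ => closedBall 0 1) (K := K)
      (fun t ht => hlip t (Set.Ico_subset_Icc_self ht))
      (hαc _ h₁) (fun t ht => toIci ht (hαd _ h₁ t (Set.Ico_subset_Icc_self ht)))
      (fun t _ => hαm _ h₁ t)
      (fun t ht => (hρ t ht).1.continuousWithinAt)
      (fun t ht => toIci ht (hρ t (Set.Ico_subset_Icc_self ht)).1)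
      (fun t ht => (hρ t (Set.Ico_subset_Icc_self ht)).2) (hα0 _ h₁)
  have hzero : ∀ t ∈ Set.Icc 0 T, α 0 t = 0 := by
    intro t ht
    have := huniq (fun _ => 0) (fun t _ => ⟨by
      simpa [h0] using hasDerivWithinAt_const t (Set.Icc 0 T) (0:ℂ), by simp⟩) (by simp)
    exact this ht
  have hder : ∀ z₂ ∈ ball (0:ℂ) (7 / 8), HasDerivAt (fun z => α z T)
      (Complex.exp (∫ t in (0:ℝ)..T, deriv (f t) (α z₂ t))) z₂ := by
    intro z₂ hz₂
    rw [hasDerivAt_iff_tendsto_slope]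
    -- `F z` is bounded by `K`, and well defined since distinct solutions never meet (`hinj`)
    set F : ℂ → ℝ → ℂ := fun z t => slope (f t) (α z₂ t) (α z t) with hF
    have hnear : ∀ᶠ z in nhdsWithin z₂ {z₂}ᶜ, z ∈ ball (0:ℂ) (7 / 8) ∧ z ≠ z₂ := by
      filter_upwards [nhdsWithin_le_nhds (isOpen_ball.mem_nhds hz₂), self_mem_nhdsWithin]
        with z h1 h2
      exact ⟨h1, h2⟩
    have hfc : ∀ z ∈ ball (0:ℂ) (7/8), ContinuousOn (fun t => f t (α z t)) (Set.Icc 0 T) :=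
      fun z hz => hcont.comp (f := fun t : ℝ => (t, α z t))
        (continuousOn_id.prodMk (hαc z (hballs hz)))
        (fun t ht => ⟨ht, hαm z (hballs hz) t⟩)
    have hFc : ∀ z, z ∈ ball (0:ℂ) (7 / 8) ∧ z ≠ z₂ → ContinuousOn (F z) (Set.Icc 0 T) := by
      intro z hz
      simp only [hF, slope_def_field]
      refine ContinuousOn.div ((hfc z hz.1).sub (hfc z₂ hz₂))
        ((hαc z (hballs hz.1)).sub (hαc z₂ (hballs hz₂))) ?_
      intro t ht h
      exact hz.2 (hinj z (hballs hz.1) z₂ (hballs hz₂) t ht (sub_eq_zero.1 h))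
    have hslope : ∀ᶠ z in nhdsWithin z₂ {z₂}ᶜ,
        Complex.exp (∫ t in (0:ℝ)..T, F z t) = slope (fun z => α z T) z₂ z := by
      filter_upwards [hnear] with z hz
      have := linear_ode (u := fun t => α z t - α z₂ t) (a := F z) hT (hFc z hz) (by
        intro t ht
        refine ((hαd z (hballs hz.1) t ht).sub (hαd z₂ (hballs hz₂) t ht)).congr_deriv ?_
        have hne : α z t - α z₂ t ≠ 0 := fun h =>
          hz.2 (hinj z (hballs hz.1) z₂ (hballs hz₂) t ht (sub_eq_zero.1 h))
        simp only [hF, slope_def_field]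
        field_simp)
      simp only [hα0 z (hballs hz.1), hα0 z₂ (hballs hz₂)] at this
      rw [slope_def_field, this, mul_div_cancel_left₀ _ (sub_ne_zero.2 hz.2)]
    refine Filter.Tendsto.congr' hslope ?_
    refine (Complex.continuous_exp.tendsto _).comp ?_
    have hsub : Set.uIoc 0 T ⊆ Set.Icc 0 T := by
      rw [Set.uIoc_of_le hT]; exact Set.Ioc_subset_Icc_self
    refine intervalIntegral.tendsto_integral_filter_of_dominated_convergence (fun _ => (K:ℝ))
      ?_ ?_ (by simp) ?_
    · filter_upwards [hnear] with z hz
      exact ((hFc z hz).mono hsub).aestronglyMeasurable measurableSet_uIoc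
    · filter_upwards [hnear] with z hz
      refine Filter.Eventually.of_forall fun t ht => ?_
      have hne : α z t - α z₂ t ≠ 0 := fun h =>
        hz.2 (hinj z (hballs hz.1) z₂ (hballs hz₂) t (hsub ht) (sub_eq_zero.1 h))
      simp only [hF, slope_def_field, norm_div]
      rw [div_le_iff₀ (norm_pos_iff.2 hne)]
      have := (hlip t (hsub ht)).dist_le_mul _ (hαm z (hballs hz.1) t) _ (hαm z₂ (hballs hz₂) t)
      simpa [dist_eq_norm] using this
    · refine Filter.Eventually.of_forall fun t ht => ?_
      have hd : HasDerivAt (f t) (deriv (f t) (α z₂ t)) (α z₂ t) :=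
        ((hdiff t (hsub ht)).differentiableAt
          (isOpen_ball.mem_nhds (hball1 z₂ hz₂ t (hsub ht)))).hasDerivAt
      refine (hasDerivAt_iff_tendsto_slope.1 hd).comp ?_
      refine tendsto_nhdsWithin_iff.2 ⟨?_, ?_⟩
      · rw [tendsto_iff_dist_tendsto_zero]
        have hlim : Filter.Tendsto (fun z => dist z z₂ * Real.exp (K * (t - 0)))
            (nhdsWithin z₂ {z₂}ᶜ) (nhds 0) := by
          have : Continuous (fun z => dist z z₂ * Real.exp (K * (t - 0))) := by fun_prop
          have h := this.tendsto z₂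
          simp only [dist_self, zero_mul] at h
          exact h.mono_left nhdsWithin_le_nhds
        refine squeeze_zero' (Filter.Eventually.of_forall fun _ => dist_nonneg) ?_ hlim
        filter_upwards [hnear] with z hz
        exact hgron z (hballs hz.1) z₂ (hballs hz₂) t (hsub ht)
      · filter_upwards [hnear] with z hz h
        exact hz.2 (hinj z (hballs hz.1) z₂ (hballs hz₂) t (hsub ht) h)
  have h0m : (0:ℂ) ∈ ball (0:ℂ) (7/8) := by simp
  refine ⟨fun z => α z T, fun z hz => (hder z hz).differentiableAt.differentiableWithinAt, ?_,
    fun z hz => hdisp z (hballs hz) T (Set.right_mem_Icc.2 hT), hzero T (Set.right_mem_Icc.2 hT),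
    fun ρ hρ hρ0 => huniq ρ hρ hρ0 (Set.right_mem_Icc.2 hT)⟩
  convert hder 0 h0m using 2
  apply intervalIntegral.integral_congr
  intro t ht
  rw [Set.uIcc_of_le hT] at ht
  simp only [hzero t ht]

/-! ### Counting zeros of holomorphic functions -/

/-- Jensen-type bound: each zero of `g` in the disk of radius `1/2` costs a factor `3/2` in
`‖g 0‖`, compared with the maximum of `‖g‖` on the circle of radius `3/4`. The zeros are divided out
one at a time by the Blaschke factor of the disk of radius `3/4`, which has modulus one on the
circle and modulus at most `(1/2)/(3/4) = 2/3` at the origin. -/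
theorem zero_count (S : Finset ℂ) : ∀ (g : ℂ → ℂ) (M : ℝ),
    DifferentiableOn ℂ g (ball 0 (7 / 8)) → (∀ z, ‖z‖ = 3 / 4 → ‖g z‖ ≤ M) →
    (∀ z ∈ S, ‖z‖ ≤ 1 / 2 ∧ g z = 0) → ‖g 0‖ * (3 / 2) ^ S.card ≤ M := by
  have hnb : ∀ z : ℂ, ‖z‖ < 7 / 8 → ball (0:ℂ) (7 / 8) ∈ nhds z := fun z hz =>
    isOpen_ball.mem_nhds (by simpa using hz)
  induction S using Finset.induction_on with
  | empty =>
    intro g M hg hM _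
    simp only [Finset.card_empty, pow_zero, mul_one]
    refine Complex.norm_le_of_forall_mem_frontier_norm_le (U := ball (0:ℂ) (3 / 4))
      isBounded_ball ?_ ?_ ?_
    · refine (hg.mono ?_).diffContOnCl
      rw [closure_ball _ (by norm_num)]
      exact closedBall_subset_ball (by norm_num)
    · intro z hz
      rw [frontier_ball _ (by norm_num)] at hz
      exact hM z (by simpa using hz)
    · exact subset_closure (by simp)
  | insert a S ha ih =>
    intro g M hg hM hS
    obtain ⟨ha1, ha2⟩ := hS a (Finset.mem_insert_self _ _)
    -- the factor `(z - a) / B z` has modulus one on the circle of radius `3/4`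
    set B : ℂ → ℂ := fun z => (3 / 4) - (starRingEnd ℂ a) * z * (4 / 3) with hB
    set g₁ : ℂ → ℂ := fun z => dslope g a z * B z with hg₁
    have hmul : ∀ z, g z = (z - a) * dslope g a z := by
      intro z
      have := sub_smul_dslope g a z
      simp only [smul_eq_mul, ha2, sub_zero] at this
      exact this.symm
    have h1 : DifferentiableOn ℂ g₁ (ball 0 (7 / 8)) := by
      refine DifferentiableOn.mul ?_ (by fun_prop)
      exact (Complex.differentiableOn_dslope (hnb a (by linarith))).2 hg
    have h2 : ∀ z, ‖z‖ = 3 / 4 → ‖g₁ z‖ ≤ M := by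
      intro z hz
      have hBz : ‖B z‖ = ‖z - a‖ := by
        have hzz : z * starRingEnd ℂ z = 9 / 16 := by
          rw [Complex.mul_conj, Complex.normSq_eq_norm_sq, hz]; push_cast; norm_num
        have : B z = (4 / 3) * (z * starRingEnd ℂ (z - a)) := by
          simp only [hB, map_sub]
          linear_combination (-4 / 3 : ℂ) * hzz
        rw [this, norm_mul, norm_mul, hz, RCLike.norm_conj]
        norm_num
        ring
      have : ‖g₁ z‖ = ‖g z‖ := by
        rw [hmul z]; simp only [hg₁, norm_mul, hBz]; ring
      rw [this]; exact hM z hz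
    have h3 := ih g₁ M h1 h2 (by
      intro z hz
      obtain ⟨hz1, hz2⟩ := hS z (Finset.mem_insert_of_mem hz)
      refine ⟨hz1, ?_⟩
      have hne : z - a ≠ 0 := sub_ne_zero.2 (fun h => ha (h ▸ hz))
      have := hmul z
      rw [hz2, eq_comm, mul_eq_zero] at this
      simp [hg₁, this.resolve_left hne])
    rw [Finset.card_insert_of_notMem ha, pow_succ]
    refine le_trans ?_ h3
    have : ‖g 0‖ * (3 / 2) ≤ ‖g₁ 0‖ := by
      rw [hmul 0]
      simp only [hg₁, hB, zero_sub, norm_mul, norm_neg, mul_zero, zero_mul, sub_zero]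
      norm_num
      nlinarith [norm_nonneg (dslope g a 0)]
    calc ‖g 0‖ * ((3 / 2) ^ S.card * (3 / 2)) = (‖g 0‖ * (3 / 2)) * (3 / 2) ^ S.card := by ring
      _ ≤ _ := by gcongr

/-! ### Slabs of convex sets -/

/-- For a measure that scales like a `K`-dimensional one, a convex set `V` containing a point `p`
at height `ℓ p > 0` has only a small proportion of its mass in the slab `|ℓ| ≤ ε`.

With `q = 1 - 2ε / ℓ p`, the homotheties of centre `p` and ratios `q ^ j`, `j = 0, 1, …`, send the
slab of `V` to subsets of `V` lying over the disjoint intervals `I j`; summing the geometric series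
of their measures gives `μ(slab) ≤ (1 - q ^ (K + 1)) μ(V)`, and Bernoulli's inequality concludes.
The exponent `K + 1` in place of `K` keeps the ratio of the series below one when `K = 0`. -/
theorem slab_measure_pos {E : Type*} [NormedAddCommGroup E] [NormedSpace ℝ E] [MeasurableSpace E]
    [BorelSpace E] (μ : Measure E) (K : ℕ)
    (hμ : ∀ (p : E) (q : ℝ), 0 < q → ∀ S : Set E,
      μ (AffineMap.homothety p q '' S) = ENNReal.ofReal (q ^ K) * μ S)
    (ℓ : E →L[ℝ] ℝ) {V : Set E} (hV : Convex ℝ V) {p : E} (hp : p ∈ V) {ε : ℝ}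
    (hε : 0 < ε) (ht : 0 < ℓ p) :
    μ ({v | |ℓ v| ≤ ε} ∩ V) ≤ ENNReal.ofReal (2 * (K + 1) * ε / ℓ p) * μ V := by
  set t := ℓ p with htdef
  -- for `t ≤ 2 * ε` the right-hand side is at least `μ V`
  rcases le_or_gt t (2 * ε) with hbig | hsmall
  · refine (measure_mono Set.inter_subset_right).trans ?_
    refine le_mul_of_one_le_left zero_le ?_
    rw [ENNReal.one_le_ofReal, le_div_iff₀ ht]
    nlinarith [mul_nonneg (Nat.cast_nonneg (α := ℝ) K) hε.le]
  set q : ℝ := 1 - 2 * ε / t with hq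
  have hqt : q * t = t - 2 * ε := by rw [hq]; field_simp
  have hx1 : 2 * ε / t < 1 := (div_lt_one ht).2 hsmall
  have hx0 : 0 < 2 * ε / t := by positivity
  have hq0 : 0 < q := by rw [hq]; linarith
  have hq1 : q < 1 := by rw [hq]; linarith
  set S := {v | |ℓ v| ≤ ε} ∩ V with hS
  set I : ℕ → Set E := fun j => ℓ ⁻¹' Set.Icc (t - q ^ j * (t + ε)) (t - q ^ j * (t - ε)) with hI
  have hImeas : ∀ j, MeasurableSet (I j) := fun j => ℓ.measurable measurableSet_Icc
  have hsub : ∀ j, AffineMap.homothety p (q ^ j) '' S ⊆ I j ∩ V := by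
    rintro j _ ⟨v, ⟨hv1, hv2⟩, rfl⟩
    have hqj : 0 < q ^ j := pow_pos hq0 j
    have hqj1 : q ^ j ≤ 1 := pow_le_one₀ hq0.le hq1.le
    constructor
    · have hv := abs_le.1 (show |ℓ v| ≤ ε from hv1)
      simp only [hI, Set.mem_preimage, AffineMap.homothety_apply, vsub_eq_sub, vadd_eq_add,
        map_add, map_smul, map_sub, smul_eq_mul, Set.mem_Icc, ← htdef]
      constructor <;> nlinarith [hv.1, hv.2]
    · have := hV hp hv2 (a := 1 - q ^ j) (b := q ^ j) (by linarith) hqj.le (by ring)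
      convert this using 1
      rw [AffineMap.homothety_apply, vsub_eq_sub, vadd_eq_add]
      module
  have hdisj' : ∀ i j, i < j → Disjoint (I i) (I j) := by
    intro i j hij
    rw [Set.disjoint_left]
    intro v hvi hvj
    have h1 : ℓ v ≤ t - q ^ i * (t - ε) := hvi.2
    have h2 : t - q ^ j * (t + ε) ≤ ℓ v := hvj.1
    have h3 : q ^ j ≤ q ^ i * q := by
      rw [← pow_succ]; exact pow_le_pow_of_le_one hq0.le hq1.le hij
    have h4 : q * (t + ε) < t - ε := by nlinarith
    have h5 : q ^ j * (t + ε) ≤ q ^ i * (q * (t + ε)) := by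
      rw [← mul_assoc]; gcongr
    have h6 : q ^ i * (q * (t + ε)) < q ^ i * (t - ε) :=
      mul_lt_mul_of_pos_left h4 (pow_pos hq0 i)
    linarith
  have hdisj : Pairwise (Function.onFun Disjoint I) := by
    intro i j hij
    rcases lt_or_gt_of_ne hij with h | h
    · exact hdisj' i j h
    · exact (hdisj' j i h).symm
  set y : ℝ := q ^ (K + 1) with hy
  have hy0 : 0 ≤ y := by positivity
  have hy1 : y < 1 := pow_lt_one₀ hq0.le hq1 (by omega)
  have hsum : (∑' j : ℕ, ENNReal.ofReal y ^ j) * μ S ≤ μ V := by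
    rw [← ENNReal.tsum_mul_right]
    calc ∑' j : ℕ, ENNReal.ofReal y ^ j * μ S ≤ ∑' j, (μ.restrict V) (I j) := by
          refine ENNReal.tsum_le_tsum fun j => ?_
          rw [Measure.restrict_apply (hImeas j)]
          refine le_trans ?_ (measure_mono (hsub j))
          rw [hμ p _ (pow_pos hq0 j), ← ENNReal.ofReal_pow hy0]
          gcongr ENNReal.ofReal ?_ * _
          rw [hy, ← pow_mul, ← pow_mul]
          apply pow_le_pow_of_le_one hq0.le hq1.le
          nlinarith
      _ = (μ.restrict V) (⋃ j, I j) := (measure_iUnion hdisj hImeas).symm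
      _ ≤ (μ.restrict V) Set.univ := measure_mono (Set.subset_univ _)
      _ = μ V := Measure.restrict_apply_univ V
  rw [ENNReal.tsum_geometric] at hsum
  have h1y : 1 - ENNReal.ofReal y = ENNReal.ofReal (1 - y) := by
    rw [ENNReal.ofReal_sub _ hy0, ENNReal.ofReal_one]
  rw [h1y, ENNReal.inv_mul_le_iff (by simpa using hy1) ENNReal.ofReal_ne_top] at hsum
  refine hsum.trans ?_
  gcongr
  have hb := one_add_mul_le_pow (a := -(2 * ε / t)) (by linarith) (K + 1)
  have : (1 + -(2 * ε / t)) ^ (K + 1) = y := by rw [hy, hq]; ring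
  rw [this] at hb
  push_cast at hb
  have : 2 * (K + 1) * ε / t = (K + 1) * (2 * ε / t) := by ring
  rw [this]; linarith

theorem slab_measure {E : Type*} [NormedAddCommGroup E] [NormedSpace ℝ E] [MeasurableSpace E]
    [BorelSpace E] (μ : Measure E) (K : ℕ)
    (hμ : ∀ (p : E) (q : ℝ), 0 < q → ∀ S : Set E,
      μ (AffineMap.homothety p q '' S) = ENNReal.ofReal (q ^ K) * μ S)
    (ℓ : E →L[ℝ] ℝ) {V : Set E} (hV : Convex ℝ V) {p : E} (hp : p ∈ V) {ε : ℝ}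
    (hε : 0 < ε) (ht : ℓ p ≠ 0) :
    μ ({v | |ℓ v| ≤ ε} ∩ V) ≤ ENNReal.ofReal (2 * (K + 1) * ε / |ℓ p|) * μ V := by
  rcases lt_or_gt_of_ne ht with h | h
  · have := slab_measure_pos μ K hμ (-ℓ) hV hp hε (by simpa using h)
    simpa [abs_of_neg h] using this
  · simpa [abs_of_pos h] using slab_measure_pos μ K hμ ℓ hV hp hε h

/-- If the count at `v` is at most the number of slabs `|ℓ| ≤ A (2/3)^j` containing `v`, then its
integral over `V` is at most `(J + 3) μ(V)`: the first `J` slabs are bounded trivially, and the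
measures of the others decay geometrically with sum at most `3 μ(V)`. -/
theorem count_integral {E : Type*} [NormedAddCommGroup E] [NormedSpace ℝ E] [MeasurableSpace E]
    [BorelSpace E] (μ : Measure E) (K : ℕ)
    (hμ : ∀ (p : E) (q : ℝ), 0 < q → ∀ S : Set E,
      μ (AffineMap.homothety p q '' S) = ENNReal.ofReal (q ^ K) * μ S)
    (ℓ : E →L[ℝ] ℝ) {V : Set E} (hV : Convex ℝ V) {p : E} (hp : p ∈ V)
    (ht : ℓ p ≠ 0) {A : ℝ} (hA : 0 < A) {C : E → ℝ≥0∞}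
    (hC : ∀ v ∈ V, C v ≤ ∑' j : ℕ, Set.indicator {v | |ℓ v| ≤ A * (2 / 3) ^ j} 1 v)
    {J : ℕ} (hJ : 2 * (K + 1) * A / |ℓ p| ≤ (3 / 2) ^ J) :
    ∫⁻ v in V, C v ∂μ ≤ ((J : ℝ≥0∞) + 3) * μ V := by
  have hm : ∀ j : ℕ, MeasurableSet {v | |ℓ v| ≤ A * (2 / 3) ^ j} := fun j =>
    measurableSet_le (by fun_prop) measurable_const
  have hterm : ∀ j : ℕ, μ ({v | |ℓ v| ≤ A * (2 / 3) ^ (j + J)} ∩ V) ≤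
      ENNReal.ofReal (2 / 3) ^ j * μ V := by
    intro j
    refine (slab_measure μ K hμ ℓ hV hp (by positivity) ht).trans ?_
    rw [← ENNReal.ofReal_pow (by norm_num)]
    gcongr
    calc 2 * (K + 1) * (A * (2 / 3) ^ (j + J)) / |ℓ p|
        = (2 * (K + 1) * A / |ℓ p|) * (2 / 3) ^ J * (2 / 3) ^ j := by rw [pow_add]; ring
      _ ≤ (3 / 2) ^ J * (2 / 3) ^ J * (2 / 3) ^ j := by gcongr
      _ = (2 / 3) ^ j := by rw [← mul_pow]; norm_num
  calc ∫⁻ v in V, C v ∂μ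
      ≤ ∫⁻ v in V, ∑' j : ℕ, Set.indicator {v | |ℓ v| ≤ A * (2 / 3) ^ j} 1 v ∂μ := by
        refine setLIntegral_mono ?_ hC
        exact Measurable.tsum fun j => measurable_one.indicator (hm j)
    _ = ∑' j : ℕ, μ ({v | |ℓ v| ≤ A * (2 / 3) ^ j} ∩ V) := by
        rw [lintegral_tsum fun j => (measurable_one.indicator (hm j)).aemeasurable]
        congr 1; ext j
        rw [lintegral_indicator_one (hm j), Measure.restrict_apply (hm j)]
    _ = ∑ j ∈ Finset.range J, μ ({v | |ℓ v| ≤ A * (2 / 3) ^ j} ∩ V)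
        + ∑' j : ℕ, μ ({v | |ℓ v| ≤ A * (2 / 3) ^ (j + J)} ∩ V) :=
        (Summable.sum_add_tsum_nat_add' (f := fun j : ℕ =>
          μ ({v | |ℓ v| ≤ A * (2 / 3) ^ j} ∩ V)) (k := J) ENNReal.summable).symm
    _ ≤ ∑ j ∈ Finset.range J, μ V + ∑' j : ℕ, ENNReal.ofReal (2 / 3) ^ j * μ V := by
        gcongr with j _ j
        · exact Set.inter_subset_right
        · exact hterm j
    _ = ((J : ℝ≥0∞) + 3) * μ V := by
        rw [ENNReal.tsum_mul_right, ENNReal.tsum_geometric, Finset.sum_const, Finset.card_range,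
          nsmul_eq_mul, ← add_mul]
        congr 2
        rw [← ENNReal.ofReal_one, ← ENNReal.ofReal_sub _ (by norm_num),
          ← ENNReal.ofReal_inv_of_pos (by norm_num)]
        norm_num

/-! ### The polar equation -/

/-- The form `(a F + b G) / r` evaluated at `(r cos t, r sin t)`, as a polynomial in `r`. The
radius lives in an arbitrary commutative `ℝ`-algebra so that it may be real or complex. The exponent
of `r` involves no truncation because `1 ≤ i + k` for the indices in `coeffIdx d`. -/
noncomputable def polSum {A : Type*} [CommRing A] [Algebra ℝ A] (d : ℕ) (v : CoefSpace d)
    (a b t : ℝ) (r : A) : A :=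
  ∑ p : ↥(coeffIdx d), ((v (Sum.inl p) * a + v (Sum.inr p) * b) *
    (Real.cos t ^ (p : ℕ × ℕ).2 * Real.sin t ^ (p : ℕ × ℕ).1)) •
      r ^ ((p : ℕ × ℕ).1 + (p : ℕ × ℕ).2 - 1)

theorem mem_coeffIdx {d : ℕ} {p : ℕ × ℕ} : p ∈ coeffIdx d ↔ 1 ≤ p.1 + p.2 ∧ p.1 + p.2 ≤ d := by
  simp only [coeffIdx, Finset.mem_filter, Finset.mem_product, Finset.mem_range]
  constructor
  · exact fun h => h.2
  · exact fun h => ⟨⟨by omega, by omega⟩, h⟩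

theorem polSum_ofReal (d : ℕ) (v : CoefSpace d) (a b t r : ℝ) :
    polSum d v a b t (r : ℂ) = ((polSum d v a b t r : ℝ) : ℂ) := by
  simp [polSum]

/-- Each homogeneous part contributes at most `(x + y) ^ m = 1`. -/
theorem sum_coeffIdx_le (d : ℕ) {x y : ℝ} (hx : 0 ≤ x) (hy : 0 ≤ y) (hxy : x + y = 1) :
    ∑ p ∈ coeffIdx d, x ^ p.2 * y ^ p.1 ≤ d := by
  have hmaps : ∀ p ∈ coeffIdx d, p.1 + p.2 ∈ Finset.Icc 1 d := fun p hp =>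
    Finset.mem_Icc.2 (mem_coeffIdx.1 hp)
  rw [← Finset.sum_fiberwise_of_maps_to hmaps]
  calc _ ≤ ∑ m ∈ Finset.Icc 1 d, (1:ℝ) := by
        refine Finset.sum_le_sum fun m _ => ?_
        calc _ ≤ ∑ p ∈ Finset.HasAntidiagonal.antidiagonal m, x ^ p.2 * y ^ p.1 := by
              refine Finset.sum_le_sum_of_subset_of_nonneg ?_ (fun p _ _ => by positivity)
              intro p hp
              exact Finset.HasAntidiagonal.mem_antidiagonal.2 (Finset.mem_filter.1 hp).2
          _ ≤ ∑ p ∈ Finset.HasAntidiagonal.antidiagonal m, m.choose p.1 • (y ^ p.1 * x ^ p.2) := by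
              refine Finset.sum_le_sum fun p hp => ?_
              rw [mul_comm, nsmul_eq_mul]
              refine le_mul_of_one_le_left (by positivity) ?_
              have : p.1 ≤ m := by have := Finset.HasAntidiagonal.mem_antidiagonal.1 hp; omega
              exact_mod_cast Nat.choose_pos this
          _ = 1 := by rw [← (Commute.all y x).add_pow', add_comm, hxy, one_pow]
    _ = d := by simp

/-- Cauchy–Schwarz in the coefficients: on the complex unit disk `(a F + b G) / r` is bounded by
`‖v‖ √d`. -/
theorem polSum_norm_le (d : ℕ) (v : CoefSpace d) {a b : ℝ} (hab : a ^ 2 + b ^ 2 = 1) (t : ℝ)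
    {r : ℂ} (hr : ‖r‖ ≤ 1) : ‖polSum d v a b t r‖ ≤ ‖v‖ * √d := by
  set u : ↥(coeffIdx d) → ℝ := fun p => |v (Sum.inl p) * a + v (Sum.inr p) * b| with hu
  set w : ↥(coeffIdx d) → ℝ := fun p =>
    |Real.cos t ^ (p : ℕ × ℕ).2 * Real.sin t ^ (p : ℕ × ℕ).1| with hw
  have h1 : ‖polSum d v a b t r‖ ≤ ∑ p, u p * w p := by
    refine (norm_sum_le _ _).trans (Finset.sum_le_sum fun p _ => ?_)
    rw [norm_smul, Real.norm_eq_abs, abs_mul, norm_pow]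
    exact mul_le_of_le_one_right (by positivity) (pow_le_one₀ (norm_nonneg _) hr)
  have h2 : ∑ p, u p ^ 2 ≤ ‖v‖ ^ 2 := by
    rw [EuclideanSpace.norm_sq_eq, Fintype.sum_sum_type, ← Finset.sum_add_distrib]
    refine Finset.sum_le_sum fun p _ => ?_
    simp only [hu, sq_abs, Real.norm_eq_abs]
    nlinarith [sq_nonneg (v (Sum.inl p) * b - v (Sum.inr p) * a)]
  have h3 : ∑ p, w p ^ 2 ≤ d := by
    have := sum_coeffIdx_le d (sq_nonneg (Real.cos t)) (sq_nonneg (Real.sin t))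
      (Real.cos_sq_add_sin_sq t)
    rw [← Finset.sum_coe_sort] at this
    refine le_trans (le_of_eq (Finset.sum_congr rfl fun p _ => ?_)) this
    simp only [hw, sq_abs]; ring
  refine h1.trans (abs_le_of_sq_le_sq' ?_ (by positivity)).2
  calc (∑ p, u p * w p) ^ 2 ≤ (∑ p, u p ^ 2) * ∑ p, w p ^ 2 :=
        Finset.sum_mul_sq_le_sq_mul_sq _ _ _
    _ ≤ ‖v‖ ^ 2 * d := by gcongr
    _ = (‖v‖ * √d) ^ 2 := by rw [mul_pow, Real.sq_sqrt (Nat.cast_nonneg d)]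

theorem polSum_FG (d : ℕ) (v : CoefSpace d) (a b t r : ℝ) :
    a * Fpoly d v (r * Real.cos t) (r * Real.sin t) +
      b * Gpoly d v (r * Real.cos t) (r * Real.sin t) = r * polSum d v a b t r := by
  simp only [Fpoly, Gpoly, polSum, Finset.mul_sum, ← Finset.sum_add_distrib, smul_eq_mul]
  refine Finset.sum_congr rfl fun p _ => ?_
  obtain ⟨n, hn⟩ : ∃ n, (p : ℕ × ℕ).1 + (p : ℕ × ℕ).2 = n + 1 :=
    ⟨_, (Nat.sub_add_cancel (mem_coeffIdx.1 p.2).1).symm⟩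
  have hr : r * r ^ ((p : ℕ × ℕ).1 + (p : ℕ × ℕ).2 - 1) =
      r ^ (p : ℕ × ℕ).2 * r ^ (p : ℕ × ℕ).1 := by
    rw [hn, Nat.add_sub_cancel, ← pow_succ', ← pow_add, ← hn, add_comm]
  rw [mul_pow, mul_pow]
  linear_combination (-(v (Sum.inl p) * a + v (Sum.inr p) * b) *
    (Real.cos t ^ (p : ℕ × ℕ).2 * Real.sin t ^ (p : ℕ × ℕ).1)) * hr

/-- At `r = 0` only the linear coefficients survive; the coordinates of `proj d v` are
`(a₁₀, a₀₁, b₁₀, b₀₁)`. -/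
theorem polSum_zero {d : ℕ} (hd : 1 ≤ d) (v : CoefSpace d) (a b t : ℝ) :
    polSum d v a b t (0 : ℂ) = ((proj d v 0 * a + proj d v 2 * b) * Real.cos t +
      (proj d v 1 * a + proj d v 3 * b) * Real.sin t : ℝ) := by
  have m1 : ((0, 1) : ℕ × ℕ) ∈ coeffIdx d := mem_coeffIdx.2 (by simpa using hd)
  have m2 : ((1, 0) : ℕ × ℕ) ∈ coeffIdx d := mem_coeffIdx.2 (by simpa using hd)
  have hne : (⟨(0, 1), m1⟩ : ↥(coeffIdx d)) ≠ ⟨(1, 0), m2⟩ := by simp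
  rw [polSum, ← Finset.sum_subset (Finset.subset_univ {⟨(0, 1), m1⟩, ⟨(1, 0), m2⟩}),
    Finset.sum_pair hne]
  · simp [proj, hd]
  · intro p _ hp
    have h1 := (mem_coeffIdx.1 p.2).1
    have : (p : ℕ × ℕ).1 + (p : ℕ × ℕ).2 - 1 ≠ 0 := by
      intro h
      apply hp
      obtain ⟨⟨i, k⟩, hik⟩ := p
      simp only at h h1
      simp only [Finset.mem_insert, Finset.mem_singleton, Subtype.mk.injEq, Prod.mk.injEq]
      omega
    rw [zero_pow this, smul_zero]

/-- The right-hand side of the polar equation `dr/dt = r * P / (1 + Q)` (`t` is the polar angle),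
where `P` and `Q` are the radial and tangential components of `(F, G)` divided by `r`. It makes
sense for complex `r`. -/
noncomputable def polarField (d : ℕ) (v : CoefSpace d) (t : ℝ) (r : ℂ) : ℂ :=
  r * (polSum d v (Real.cos t) (Real.sin t) t r /
    (1 + polSum d v (-Real.sin t) (Real.cos t) t r))

theorem polSum_contDiff {d : ℕ} (v : CoefSpace d) {a b : ℝ → ℝ} (ha : ContDiff ℝ 1 a)
    (hb : ContDiff ℝ 1 b) :
    ContDiff ℝ 1 (fun q : ℝ × ℂ => polSum d v (a q.1) (b q.1) q.1 q.2) := by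
  unfold polSum
  refine ContDiff.sum fun p _ => ?_
  have := Real.contDiff_cos (n := 1)
  have := Real.contDiff_sin (n := 1)
  fun_prop

theorem polSum_differentiable {d : ℕ} (v : CoefSpace d) (a b t : ℝ) :
    Differentiable ℂ (fun r : ℂ => polSum d v a b t r) := by
  unfold polSum
  simp only [Complex.real_smul]
  fun_prop

section
variable {d : ℕ} {v : CoefSpace d} {η : ℝ}

theorem polar_den_ge (hη : ‖v‖ * √d ≤ η) (t : ℝ) {r : ℂ} (hr : ‖r‖ ≤ 1) :
    1 - η ≤ ‖1 + polSum d v (-Real.sin t) (Real.cos t) t r‖ := by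
  have h1 := polSum_norm_le d v (a := -Real.sin t) (b := Real.cos t) (by simp) t hr
  have h2 := norm_sub_norm_le (1:ℂ) (-polSum d v (-Real.sin t) (Real.cos t) t r)
  rw [sub_neg_eq_add, norm_neg, norm_one] at h2
  linarith

theorem polar_quot_le (hη : ‖v‖ * √d ≤ η) (h1 : η < 1) (t : ℝ) {r : ℂ} (hr : ‖r‖ ≤ 1) :
    ‖polSum d v (Real.cos t) (Real.sin t) t r /
    (1 + polSum d v (-Real.sin t) (Real.cos t) t r)‖ ≤ η / (1 - η) := by
  rw [norm_div]
  have h2 := polSum_norm_le d v (a := Real.cos t) (b := Real.sin t) (by simp) t hr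
  have h3 := polar_den_ge hη t hr
  have : 0 ≤ η := le_trans (by positivity) hη
  exact div_le_div₀ this (h2.trans hη) (by linarith) h3

theorem polarField_norm_le (hη : ‖v‖ * √d ≤ η) (h1 : η < 1) (t : ℝ) {r : ℂ} (hr : ‖r‖ ≤ 1) :
    ‖polarField d v t r‖ ≤ η / (1 - η) := by
  rw [polarField, norm_mul]
  exact (mul_le_of_le_one_left (norm_nonneg _) hr).trans (polar_quot_le hη h1 t hr)

theorem polar_den_ne (hη : ‖v‖ * √d ≤ η) (h1 : η < 1) (t : ℝ) {r : ℂ} (hr : ‖r‖ ≤ 1) :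
    1 + polSum d v (-Real.sin t) (Real.cos t) t r ≠ 0 := by
  intro h
  have := polar_den_ge hη t hr
  rw [h, norm_zero] at this
  linarith

theorem polarField_contDiffAt (hη : ‖v‖ * √d ≤ η) (h1 : η < 1) {q : ℝ × ℂ} (hr : ‖q.2‖ ≤ 1) :
    ContDiffAt ℝ 1 (fun q : ℝ × ℂ => polarField d v q.1 q.2) q := by
  have hP := polSum_contDiff v (Real.contDiff_cos (n := 1)) (Real.contDiff_sin (n := 1))
  have hQ := polSum_contDiff v (Real.contDiff_sin (n := 1)).neg (Real.contDiff_cos (n := 1))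
  unfold polarField
  simp only [div_eq_mul_inv]
  refine contDiffAt_snd.mul (hP.contDiffAt.mul (ContDiffAt.inv ?_ ?_))
  · exact contDiffAt_const.add hQ.contDiffAt
  · exact polar_den_ne hη h1 q.1 hr

theorem polarField_periodic (t : ℝ) : polarField d v (t + 2 * π) = polarField d v t := by
  ext r
  simp [polarField, polSum]

theorem polarField_lipschitz (hη : ‖v‖ * √d ≤ η) (h1 : η < 1) :
    ∃ K : ℝ≥0, ∀ t, LipschitzOnWith K (polarField d v t) (closedBall 0 1) := by
  have hll : LocallyLipschitzOn (Set.Icc 0 (2 * π) ×ˢ closedBall (0:ℂ) 1)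
      (fun q : ℝ × ℂ => polarField d v q.1 q.2) := by
    intro q hq
    obtain ⟨K, s, hs, hK⟩ := (polarField_contDiffAt hη h1 (q := q)
      (by simpa using hq.2)).exists_lipschitzOnWith
    exact ⟨K, s, nhdsWithin_le_nhds hs, hK⟩
  obtain ⟨K, hK⟩ := hll.exists_lipschitzOnWith_of_compact
    (isCompact_Icc.prod (isCompact_closedBall _ _))
  refine ⟨K, fun t => ?_⟩
  obtain ⟨s, hs, hst⟩ := Function.Periodic.exists_mem_Ico₀
    (f := polarField d v) (c := 2 * π) polarField_periodic (by positivity) t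
  rw [hst]
  intro x hx y hy
  have := hK (x := (s, x)) ⟨Set.Ico_subset_Icc_self hs, hx⟩ (y := (s, y))
    ⟨Set.Ico_subset_Icc_self hs, hy⟩
  simpa [Prod.edist_eq] using this

theorem polarField_hasDerivAt_zero (hη : ‖v‖ * √d ≤ η) (h1 : η < 1) (t : ℝ) :
    HasDerivAt (polarField d v t) (polSum d v (Real.cos t) (Real.sin t) t 0 /
      (1 + polSum d v (-Real.sin t) (Real.cos t) t 0)) 0 := by
  have hd : DifferentiableAt ℂ (fun r : ℂ => polSum d v (Real.cos t) (Real.sin t) t r /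
      (1 + polSum d v (-Real.sin t) (Real.cos t) t r)) 0 :=
    (polSum_differentiable v _ _ t).differentiableAt.div
      ((differentiableAt_const _).add (polSum_differentiable v _ _ t).differentiableAt)
      (polar_den_ne hη h1 t (by simp))
  have h2 := (hasDerivAt_id (0:ℂ)).mul hd.hasDerivAt
  rw [id, one_mul, zero_mul, add_zero] at h2
  exact h2

theorem polarField_differentiableOn (hη : ‖v‖ * √d ≤ η) (h1 : η < 1) (t : ℝ) :
    DifferentiableOn ℂ (polarField d v t) (ball 0 1) := by
  intro r hr
  have hr' : ‖r‖ ≤ 1 := by simpa using (ball_subset_closedBall hr)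
  refine DifferentiableAt.differentiableWithinAt (differentiableAt_id.mul ?_)
  exact (polSum_differentiable v _ _ t).differentiableAt.div
      ((differentiableAt_const _).add (polSum_differentiable v _ _ t).differentiableAt)
      (polar_den_ne hη h1 t hr')

end

/-! ### Orbits in the disk and their polar form -/

theorem vecField_contDiff (d : ℕ) (v : CoefSpace d) : ContDiff ℝ 1 (vecField d v) := by
  unfold vecField Fpoly Gpoly
  fun_prop

theorem vecField_zero (d : ℕ) (v : CoefSpace d) : vecField d v 0 = 0 := by
  have h : ∀ p : ↥(coeffIdx d), (0:ℝ) ^ (p : ℕ × ℕ).2 * 0 ^ (p : ℕ × ℕ).1 = 0 := fun p => by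
    rw [← pow_add, zero_pow]
    have := (mem_coeffIdx.1 p.2).1
    omega
  simp [vecField, Fpoly, Gpoly, mul_assoc, h]

/-- The closed disk `D_{1/2}` of radius `1/2` centred at the origin. -/
def halfDisk : Set (ℝ × ℝ) := {q : ℝ × ℝ | q.1 ^ 2 + q.2 ^ 2 ≤ 1 / 4}

theorem isCompact_halfDisk : IsCompact halfDisk := by
  refine (isCompact_Icc (a := ((-1, -1) : ℝ × ℝ)) (b := (1, 1))).of_isClosed_subset
    (isClosed_le (by fun_prop) (by fun_prop)) ?_
  intro q hq
  have hq : q.1 ^ 2 + q.2 ^ 2 ≤ 1 / 4 := hq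
  refine ⟨⟨?_, ?_⟩, ⟨?_, ?_⟩⟩ <;> simp only <;> nlinarith [sq_nonneg q.1, sq_nonneg q.2]

theorem sol_unique {d : ℕ} {v : CoefSpace d} {s₁ s₂ : ℝ → ℝ × ℝ}
    (h1 : ∀ t, HasDerivAt s₁ (vecField d v (s₁ t)) t) (m1 : ∀ t, s₁ t ∈ halfDisk)
    (h2 : ∀ t, HasDerivAt s₂ (vecField d v (s₂ t)) t) (m2 : ∀ t, s₂ t ∈ halfDisk)
    {t₀ : ℝ} (h : s₁ t₀ = s₂ t₀) : s₁ = s₂ := by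
  have hll : LocallyLipschitzOn halfDisk (vecField d v) := by
    intro q hq
    obtain ⟨K, s, hs, hK⟩ := ((vecField_contDiff d v).contDiffAt (x := q)).exists_lipschitzOnWith
    exact ⟨K, s, nhdsWithin_le_nhds hs, hK⟩
  obtain ⟨K, hK⟩ := hll.exists_lipschitzOnWith_of_compact isCompact_halfDisk
  exact ODE_solution_unique_univ (v := fun _ => vecField d v) (s := fun _ => halfDisk)
    (fun _ => hK) (fun t => ⟨h1 t, m1 t⟩) (fun t => ⟨h2 t, m2 t⟩) h

/-- Two periodic orbits contained in the disk that share a point coincide. -/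
theorem orbit_inj {d : ℕ} {v : CoefSpace d} {Γ₁ Γ₂ : Set (ℝ × ℝ)}
    (h1 : IsPeriodicOrbit (vecField d v) Γ₁) (m1 : Γ₁ ⊆ halfDisk)
    (h2 : IsPeriodicOrbit (vecField d v) Γ₂) (m2 : Γ₂ ⊆ halfDisk)
    {q : ℝ × ℝ} (hq1 : q ∈ Γ₁) (hq2 : q ∈ Γ₂) : Γ₁ = Γ₂ := by
  obtain ⟨s₁, -, -, hs₁, -, -, rfl⟩ := h1
  obtain ⟨s₂, -, -, hs₂, -, -, rfl⟩ := h2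
  obtain ⟨t₁, rfl⟩ := hq1
  obtain ⟨t₂, ht⟩ := hq2
  have := sol_unique (v := v) (s₁ := fun t => s₁ (t + t₁)) (s₂ := fun t => s₂ (t + t₂)) (t₀ := 0)
    (fun t => (hs₁ _).comp_add_const t t₁) (fun t => m1 ⟨_, rfl⟩)
    (fun t => (hs₂ _).comp_add_const t t₂) (fun t => m2 ⟨_, rfl⟩) (by simpa using ht.symm)
  have e1 : Set.range (fun t => s₁ (t + t₁)) = Set.range s₁ :=
    (Equiv.addRight t₁).surjective.range_comp s₁
  have e2 : Set.range (fun t => s₂ (t + t₂)) = Set.range s₂ :=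
    (Equiv.addRight t₂).surjective.range_comp s₂
  rw [← e1, ← e2, this]

/-- A nowhere vanishing solution has a polar form `exp (l) (cos θ, sin θ)` with differentiable
`l` and `θ`, which satisfy the polar equations for `(log r, angle)`. They are the real and imaginary
part of the complex logarithm `Λ` obtained by integrating `ζ' / ζ`, where `ζ` is the solution seen in
the complex plane. -/
theorem polar_lift {d : ℕ} {v : CoefSpace d} {s : ℝ → ℝ × ℝ}
    (hs : ∀ t, HasDerivAt s (vecField d v (s t)) t) (h0 : ∀ t, s t ≠ 0) :
    ∃ l θ : ℝ → ℝ,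
      (∀ t, HasDerivAt l (polSum d v (Real.cos (θ t)) (Real.sin (θ t)) (θ t) (Real.exp (l t))) t) ∧
      (∀ t, HasDerivAt θ
        (1 + polSum d v (-Real.sin (θ t)) (Real.cos (θ t)) (θ t) (Real.exp (l t))) t) ∧
      ∀ t, s t = (Real.exp (l t) * Real.cos (θ t), Real.exp (l t) * Real.sin (θ t)) := by
  set ζ : ℝ → ℂ := fun t => ⟨(s t).1, (s t).2⟩ with hζ
  set ζ' : ℝ → ℂ := fun t => ⟨(vecField d v (s t)).1, (vecField d v (s t)).2⟩ with hζ'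
  have hsc : Continuous s := continuous_iff_continuousAt.2 fun t => (hs t).continuousAt
  have hd : ∀ t, HasDerivAt ζ (ζ' t) t := fun t => by
    have := (Complex.equivRealProdCLM.symm.toContinuousLinearMap.hasFDerivAt
      (x := s t)).comp_hasDerivAt t (hs t)
    exact this
  have hζc : Continuous ζ := continuous_iff_continuousAt.2 fun t => (hd t).continuousAt
  have hζc' : Continuous ζ' :=
    Complex.equivRealProdCLM.symm.continuous.comp ((vecField_contDiff d v).continuous.comp hsc)
  have hne : ∀ t, ζ t ≠ 0 := fun t h => h0 t <| by
    have h1 := congrArg Complex.re h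
    have h2 := congrArg Complex.im h
    exact Prod.ext h1 h2
  set Λ : ℝ → ℂ := fun t => Complex.log (ζ 0) + ∫ τ in (0:ℝ)..t, ζ' τ / ζ τ with hΛ
  have hq : Continuous fun τ => ζ' τ / ζ τ := hζc'.div hζc hne
  have hdΛ : ∀ t, HasDerivAt Λ (ζ' t / ζ t) t := fun t =>
    ((hq.integral_hasStrictDerivAt 0 t).hasDerivAt).const_add _
  have hexp : ∀ t, ζ t = Complex.exp (Λ t) := by
    have hd2 : ∀ t, HasDerivAt (fun t => ζ t * Complex.exp (-Λ t)) 0 t := fun t => by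
      have := (hd t).mul ((hdΛ t).neg.cexp)
      refine this.congr_deriv ?_
      simp only [Pi.neg_apply]
      field_simp [hne t]
      ring
    intro t
    have := is_const_of_deriv_eq_zero (fun t => (hd2 t).differentiableAt)
      (fun t => (hd2 t).deriv) t 0
    simp only [Λ, intervalIntegral.integral_same, add_zero, Complex.exp_neg,
      Complex.exp_log (hne 0)] at this
    rw [mul_inv_cancel₀ (hne 0), ← div_eq_mul_inv, div_eq_one_iff_eq (Complex.exp_ne_zero _)] at this
    exact this
  have hpol : ∀ t, s t = (Real.exp (Λ t).re * Real.cos (Λ t).im,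
      Real.exp (Λ t).re * Real.sin (Λ t).im) := fun t => by
    have h1 := congrArg Complex.re (hexp t)
    have h2 := congrArg Complex.im (hexp t)
    rw [Complex.exp_re] at h1
    rw [Complex.exp_im] at h2
    exact Prod.ext h1 h2
  have hder : ∀ t, ζ' t / ζ t =
      ⟨polSum d v (Real.cos (Λ t).im) (Real.sin (Λ t).im) (Λ t).im (Real.exp (Λ t).re),
      1 + polSum d v (-Real.sin (Λ t).im) (Real.cos (Λ t).im) (Λ t).im (Real.exp (Λ t).re)⟩ := by
    intro t
    have e1 := polSum_FG d v (Real.cos (Λ t).im) (Real.sin (Λ t).im) (Λ t).im (Real.exp (Λ t).re)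
    have e2 := polSum_FG d v (-Real.sin (Λ t).im) (Real.cos (Λ t).im) (Λ t).im (Real.exp (Λ t).re)
    have e3 := Real.cos_sq_add_sin_sq (Λ t).im
    rw [div_eq_iff (hne t)]
    simp only [hζ, hζ', hpol t, vecField]
    apply Complex.ext
    · simp only [Complex.mul_re]
      linear_combination Real.cos (Λ t).im * e1 - Real.sin (Λ t).im * e2 -
        Fpoly d v (Real.exp (Λ t).re * Real.cos (Λ t).im)
          (Real.exp (Λ t).re * Real.sin (Λ t).im) * e3
    · simp only [Complex.mul_im]
      linear_combination Real.sin (Λ t).im * e1 + Real.cos (Λ t).im * e2 -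
        Gpoly d v (Real.exp (Λ t).re * Real.cos (Λ t).im)
          (Real.exp (Λ t).re * Real.sin (Λ t).im) * e3
  refine ⟨fun t => (Λ t).re, fun t => (Λ t).im, fun t => ?_, fun t => ?_, hpol⟩
  · have := (Complex.reCLM.hasFDerivAt (x := Λ t)).comp_hasDerivAt t (hdΛ t)
    rw [hder] at this
    exact this
  · have := (Complex.imCLM.hasFDerivAt (x := Λ t)).comp_hasDerivAt t (hdΛ t)
    rw [hder] at this
    exact this

/-! ### Periodic orbits as periodic solutions of the polar equation -/

/-- The angle of a nonvanishing solution in the disk increases with speed at least `1/2`, so the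
orbit can be parametrized by its angle; the radius `R`, seen as a complex function, then solves
the polar equation. -/
theorem angular_param {d : ℕ} {v : CoefSpace d} {η : ℝ} (hη : ‖v‖ * √d ≤ η) (h1 : η ≤ 1 / 2)
    {s : ℝ → ℝ × ℝ} (hs : ∀ t, HasDerivAt s (vecField d v (s t)) t) (h0 : ∀ t, s t ≠ 0)
    (hm : ∀ t, s t ∈ halfDisk) :
    ∃ R θ : ℝ → ℝ, StrictMono θ ∧ Function.Surjective θ ∧
      (∀ φ, 0 < R φ ∧ R φ ≤ 1 / 2) ∧
      (∀ φ, HasDerivAt (fun x => (R x : ℂ)) (polarField d v φ (R φ)) φ) ∧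
      ∀ t, s t = (R (θ t) * Real.cos (θ t), R (θ t) * Real.sin (θ t)) := by
  obtain ⟨l, θ, hl, hθ, hpol⟩ := polar_lift hs h0
  have hle : ∀ t, Real.exp (l t) ≤ 1 / 2 := fun t => by
    have h := hm t
    rw [hpol t] at h
    have h : (Real.exp (l t) * Real.cos (θ t)) ^ 2 + (Real.exp (l t) * Real.sin (θ t)) ^ 2 ≤ 1 / 4
      := h
    rw [mul_pow, mul_pow, ← mul_add, Real.cos_sq_add_sin_sq, mul_one] at h
    nlinarith [Real.exp_pos (l t)]
  have hge : ∀ t, 1 / 2 ≤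
      1 + polSum d v (-Real.sin (θ t)) (Real.cos (θ t)) (θ t) (Real.exp (l t)) := fun t => by
    have h := polSum_norm_le d v (a := -Real.sin (θ t)) (b := Real.cos (θ t)) (by simp) (θ t)
      (r := (Real.exp (l t) : ℝ)) (by
        rw [Complex.norm_real, Real.norm_eq_abs, abs_of_pos (Real.exp_pos _)]
        linarith [hle t])
    rw [polSum_ofReal, Complex.norm_real, Real.norm_eq_abs] at h
    linarith [(abs_le.1 (h.trans (hη.trans h1))).1]
  have hmono : StrictMono θ := strictMono_of_hasDerivAt_pos hθ fun t => by linarith [hge t]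
  have hcont : Continuous θ := continuous_iff_continuousAt.2 fun t => (hθ t).continuousAt
  have hm2 : Monotone fun t => θ t - t / 2 := by
    have hd : ∀ t, HasDerivAt (fun t => θ t - t / 2) _ t := fun t =>
      (hθ t).sub ((hasDerivAt_id t).div_const 2)
    refine monotone_of_deriv_nonneg (fun t => (hd t).differentiableAt) fun t => ?_
    rw [(hd t).deriv]
    linarith [hge t]
  have hsurj : Function.Surjective θ := by
    intro φ
    refine mem_range_of_exists_le_of_exists_ge hcont
      ⟨min 0 (2 * (φ - θ 0)), ?_⟩ ⟨max 0 (2 * (φ - θ 0)), ?_⟩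
    · have := hm2 (min_le_left 0 (2 * (φ - θ 0)))
      simp only at this
      linarith [min_le_right 0 (2 * (φ - θ 0))]
    · have := hm2 (le_max_left 0 (2 * (φ - θ 0)))
      simp only at this
      linarith [le_max_right 0 (2 * (φ - θ 0))]
  set e := hmono.orderIsoOfSurjective θ hsurj with he
  have heθ : ∀ t, e t = θ t := fun t => rfl
  have hθS : ∀ φ, θ (e.symm φ) = φ := fun φ => by rw [← heθ, OrderIso.apply_symm_apply]
  have hSθ : ∀ t, e.symm (θ t) = t := fun t => by rw [← heθ, OrderIso.symm_apply_apply]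
  have hS : ∀ φ, HasDerivAt e.symm
      (1 + polSum d v (-Real.sin φ) (Real.cos φ) φ (Real.exp (l (e.symm φ))))⁻¹ φ := fun φ => by
    have h := hθ (e.symm φ)
    have h2 := hge (e.symm φ)
    rw [hθS] at h h2
    exact HasDerivAt.of_local_left_inverse e.symm.continuous.continuousAt h (by linarith)
      (Filter.Eventually.of_forall hθS)
  refine ⟨fun φ => Real.exp (l (e.symm φ)), θ, hmono, hsurj,
    fun φ => ⟨Real.exp_pos _, hle _⟩, fun φ => ?_, fun t => by simp only [hSθ]; exact hpol t⟩
  have h := ((hl (e.symm φ)).comp φ (hS φ)).exp.ofReal_comp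
  rw [hθS] at h
  refine h.congr_deriv ?_
  rw [polarField, polSum_ofReal, polSum_ofReal]
  push_cast
  simp only [Function.comp_apply]
  rw [div_eq_mul_inv]

/-- A periodic orbit in the disk yields a `2π`-periodic solution `R` of the polar equation, and
meets the positive `x`-axis at `(R 0, 0)`. Over a period of the orbit the angle grows by `2πn` with
`n ≥ 1`; that `n = 1` may be assumed follows from uniqueness for the scalar equation: `R (φ + 2π)`
and `R φ` agree somewhere, hence everywhere. -/
theorem periodic_polar {d : ℕ} {v : CoefSpace d} {η : ℝ} (hη : ‖v‖ * √d ≤ η) (h1 : η ≤ 1 / 2)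
    {Γ : Set (ℝ × ℝ)} (hΓ : IsPeriodicOrbit (vecField d v) Γ) (hm : Γ ⊆ halfDisk) :
    ∃ R : ℝ → ℝ, (∀ φ, 0 < R φ ∧ R φ ≤ 1 / 2) ∧
      (∀ φ, HasDerivAt (fun x => (R x : ℂ)) (polarField d v φ (R φ)) φ) ∧
      R (2 * π) = R 0 ∧ (R 0, 0) ∈ Γ := by
  obtain ⟨s, T, hT, hs, hper, ⟨t₁, t₂, hne⟩, rfl⟩ := hΓ
  have hm' : ∀ t, s t ∈ halfDisk := fun t => hm ⟨t, rfl⟩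
  have h0 : ∀ t, s t ≠ 0 := by
    intro t ht
    have := sol_unique hs hm' (s₂ := fun _ => 0) (t₀ := t)
      (fun t => by rw [vecField_zero]; exact hasDerivAt_const t 0)
      (fun t => by simp [halfDisk]) ht
    apply hne
    rw [this]
  obtain ⟨R, θ, hmono, hsurj, hR, hRd, hpol⟩ := angular_param hη h1 hs h0 hm'
  have hRc : Continuous R := by
    have : Continuous fun x => (R x : ℂ) :=
      continuous_iff_continuousAt.2 fun t => (hRd t).continuousAt
    exact Complex.continuous_re.comp this
  -- after one period of the solution the angle has increased by a positive multiple of `2π`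
  obtain ⟨n, hn0, hn⟩ : ∃ n : ℕ, 0 < n ∧ θ T = θ 0 + n * (2 * π) := by
    have hp := hper 0
    rw [zero_add, hpol, hpol] at hp
    have hx := congrArg Prod.fst hp
    have hy := congrArg Prod.snd hp
    simp only at hx hy
    have hRR : R (θ T) = R (θ 0) := by
      have e1 := Real.cos_sq_add_sin_sq (θ T)
      have e2 := Real.cos_sq_add_sin_sq (θ 0)
      have hsq : R (θ T) ^ 2 = R (θ 0) ^ 2 := by
        calc R (θ T) ^ 2 = (R (θ T) * Real.cos (θ T)) ^ 2 + (R (θ T) * Real.sin (θ T)) ^ 2 := by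
              linear_combination -(R (θ T) ^ 2) * e1
          _ = _ := by rw [hx, hy]; linear_combination R (θ 0) ^ 2 * e2
      exact (pow_left_inj₀ (hR _).1.le (hR _).1.le two_ne_zero).1 hsq
    rw [hRR] at hx hy
    have hang := Real.Angle.cos_sin_inj (mul_left_cancel₀ (hR _).1.ne' hx)
      (mul_left_cancel₀ (hR _).1.ne' hy)
    obtain ⟨k, hk⟩ := Real.Angle.angle_eq_iff_two_pi_dvd_sub.1 hang
    have hlt := hmono hT
    have hk0 : 0 < k := by
      have : 0 < 2 * π * (k:ℝ) := by linarith
      exact_mod_cast (pos_iff_pos_of_mul_pos this).1 (by positivity)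
    lift k to ℕ using hk0.le
    refine ⟨k, by exact_mod_cast hk0, ?_⟩
    push_cast at hk
    linarith
  have hRn : R (θ 0 + n * (2 * π)) = R (θ 0) := by
    have hp := hper 0
    rw [zero_add, hpol, hpol, hn] at hp
    have hx := congrArg Prod.fst hp
    have hy := congrArg Prod.snd hp
    simp only [Real.cos_add_nat_mul_two_pi, Real.sin_add_nat_mul_two_pi] at hx hy
    linear_combination Real.cos (θ 0) * hx + Real.sin (θ 0) * hy -
      (R (θ 0 + n * (2 * π)) - R (θ 0)) * Real.cos_sq_add_sin_sq (θ 0)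
  -- the first difference of `R` over `2π` must vanish somewhere
  obtain ⟨φ, hφ⟩ : ∃ φ, R (φ + 2 * π) - R φ = 0 := by
    have hc : Continuous fun φ => R (φ + 2 * π) - R φ := by fun_prop
    have hsum : ∑ i ∈ Finset.range n,
        (R (θ 0 + i * (2 * π) + 2 * π) - R (θ 0 + i * (2 * π))) = 0 := by
      have := Finset.sum_range_sub (fun i : ℕ => R (θ 0 + i * (2 * π))) n
      simp only [Nat.cast_zero, zero_mul, add_zero, hRn, sub_self] at this
      refine Eq.trans ?_ this
      refine Finset.sum_congr rfl fun i _ => ?_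
      congr 2
      push_cast
      ring
    have hne : (Finset.range n).Nonempty := ⟨0, by simpa using hn0⟩
    refine mem_range_of_exists_le_of_exists_ge hc ?_ ?_
    · by_contra! h
      exact (Finset.sum_pos (fun (i : ℕ) _ => h (θ 0 + i * (2 * π))) hne).ne' hsum
    · by_contra! h
      exact (Finset.sum_neg (fun (i : ℕ) _ => h (θ 0 + i * (2 * π))) hne).ne hsum
  obtain ⟨K, hK⟩ := polarField_lipschitz hη (by linarith : η < 1)
  have hball : ∀ φ, (R φ : ℂ) ∈ closedBall (0:ℂ) 1 := fun φ => by
    rw [mem_closedBall_zero_iff, Complex.norm_real, Real.norm_eq_abs, abs_of_pos (hR φ).1]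
    linarith [(hR φ).2]
  have hRper : (fun x => (R (x + 2 * π) : ℂ)) = fun x => (R x : ℂ) := by
    refine ODE_solution_unique_univ (v := polarField d v) (s := fun _ => closedBall 0 1)
      (t₀ := φ) hK (fun t => ⟨?_, hball _⟩) (fun t => ⟨hRd t, hball t⟩) (by
        rw [sub_eq_zero.1 hφ])
    rw [← polarField_periodic]
    exact (hRd _).comp_add_const t (2 * π)
  refine ⟨R, hR, hRd, ?_, ?_⟩
  · have := congrFun hRper 0
    simp only [zero_add] at this
    exact_mod_cast this
  · obtain ⟨t, ht⟩ := hsurj 0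
    exact ⟨t, by rw [hpol, ht]; simp⟩

/-! ### Counting limit cycles of one system -/

/-- The integrated linearization `κ` of the polar equation at `r = 0` is controlled by the trace
`a₁₀ + b₀₁`. With `P`, `Q` the radial and tangential parts of the linear terms, `Q' = trace - 2 P`,
so `P / (1 + Q)` differs from `(trace / 2) / (1 + Q)` by the derivative of a periodic function, and
`κ = (trace / 2) ∫ 1 / (1 + Q)`. -/
theorem multiplier_real {d : ℕ} {v : CoefSpace d} (hd : 1 ≤ d) {η : ℝ} (hη : ‖v‖ * √d ≤ η)
    (h1 : η ≤ 1 / 40) :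
    ∃ κ : ℝ, ∫ t in (0:ℝ)..2 * π, deriv (polarField d v t) 0 = (κ : ℂ) ∧
      3 * |proj d v 0 + proj d v 3| ≤ |κ| ∧ |κ| ≤ η / (1 - η) * (2 * π) := by
  set p := proj d v with hp
  set P : ℝ → ℝ := fun t => (p 0 * Real.cos t + p 2 * Real.sin t) * Real.cos t +
    (p 1 * Real.cos t + p 3 * Real.sin t) * Real.sin t with hP
  set Q : ℝ → ℝ := fun t => (p 0 * -Real.sin t + p 2 * Real.cos t) * Real.cos t +
    (p 1 * -Real.sin t + p 3 * Real.cos t) * Real.sin t with hQ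
  have hη1 : η < 1 := by linarith
  have hder : ∀ t, deriv (polarField d v t) 0 = ((P t / (1 + Q t) : ℝ) : ℂ) := fun t => by
    rw [(polarField_hasDerivAt_zero hη hη1 t).deriv, polSum_zero hd, polSum_zero hd,
      Complex.ofReal_div, Complex.ofReal_add 1, Complex.ofReal_one]
  have hQle : ∀ t, |Q t| ≤ η := fun t => by
    have := polSum_norm_le d v (a := -Real.sin t) (b := Real.cos t) (by simp) t (r := 0) (by simp)
    rw [polSum_zero hd, Complex.norm_real, Real.norm_eq_abs] at this
    exact this.trans hη
  have hQ0 : ∀ t, 39 / 40 ≤ 1 + Q t := fun t => by linarith [(abs_le.1 (hQle t)).1]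
  have hQ1 : ∀ t, 1 + Q t ≤ 41 / 40 := fun t => by linarith [(abs_le.1 (hQle t)).2]
  have hQd : ∀ t, HasDerivAt Q (p 0 + p 3 - 2 * P t) t := fun t => by
    have hs := Real.hasDerivAt_sin t
    have hc := Real.hasDerivAt_cos t
    have := (((hs.neg.const_mul (p 0)).add (hc.const_mul (p 2))).mul hc).add
      (((hs.neg.const_mul (p 1)).add (hc.const_mul (p 3))).mul hs)
    refine this.congr_deriv ?_
    simp only [hP, Pi.add_apply, Pi.neg_apply]
    linear_combination (p 0 + p 3) * Real.cos_sq_add_sin_sq t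
  have hPc : Continuous P := by fun_prop
  have hQc : Continuous Q := by fun_prop
  have hne : ∀ t, 1 + Q t ≠ 0 := fun t => by linarith [hQ0 t]
  have hI1 : Continuous fun t => P t / (1 + Q t) := by
    exact hPc.div (continuous_const.add hQc) hne
  have hI2 : Continuous fun t => (1 + Q t)⁻¹ := (continuous_const.add hQc).inv₀ hne
  have hκ : ∫ t in (0:ℝ)..2 * π, P t / (1 + Q t) =
      (p 0 + p 3) / 2 * ∫ t in (0:ℝ)..2 * π, (1 + Q t)⁻¹ := by
    have hd : ∀ t ∈ Set.uIcc 0 (2 * π), HasDerivAt (fun t => 1 / 2 * Real.log (1 + Q t))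
        ((p 0 + p 3) / 2 * (1 + Q t)⁻¹ - P t / (1 + Q t)) t := fun t _ => by
      have := (((hQd t).const_add 1).log (hne t)).const_mul (1 / 2)
      refine this.congr_deriv ?_
      ring
    have := intervalIntegral.integral_eq_sub_of_hasDerivAt hd
      (Continuous.intervalIntegrable (by fun_prop) _ _)
    rw [intervalIntegral.integral_sub (Continuous.intervalIntegrable (by fun_prop) _ _)
      (hI1.intervalIntegrable _ _), intervalIntegral.integral_const_mul] at this
    have hQp : Q (2 * π) = Q 0 := by simp [hQ]
    rw [hQp, sub_self] at this
    linarith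
  refine ⟨∫ t in (0:ℝ)..2 * π, P t / (1 + Q t), ?_, ?_, ?_⟩
  · simp only [hder]
    exact intervalIntegral.integral_ofReal
  · rw [hκ, abs_mul, abs_div, abs_two]
    have hlow : 6 ≤ ∫ t in (0:ℝ)..2 * π, (1 + Q t)⁻¹ := by
      have : ∫ t in (0:ℝ)..2 * π, (40 / 41 : ℝ) ≤ ∫ t in (0:ℝ)..2 * π, (1 + Q t)⁻¹ := by
        refine intervalIntegral.integral_mono_on (by positivity)
          (Continuous.intervalIntegrable (by fun_prop) _ _) (hI2.intervalIntegrable _ _)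
          fun t _ => ?_
        rw [show (40 / 41 : ℝ) = (41 / 40)⁻¹ by norm_num]
        exact inv_anti₀ (by linarith [hQ0 t]) (hQ1 t)
      rw [intervalIntegral.integral_const, smul_eq_mul, sub_zero] at this
      nlinarith [Real.pi_gt_d2]
    have := le_abs_self (∫ t in (0:ℝ)..2 * π, (1 + Q t)⁻¹)
    nlinarith [abs_nonneg (p 0 + p 3)]
  · have := intervalIntegral.norm_integral_le_of_norm_le_const (a := 0) (b := 2 * π)
      (f := fun t => P t / (1 + Q t)) (C := η / (1 - η)) fun t _ => by
        have h := polar_quot_le hη hη1 t (r := 0) (by simp)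
        rw [polSum_zero hd, polSum_zero hd] at h
        rw [← Complex.norm_real, Complex.ofReal_div, Complex.ofReal_add 1, Complex.ofReal_one]
        exact h
    rw [sub_zero, abs_of_pos (by positivity : 0 < 2 * π)] at this
    exact this

/-- A finite family of `n` periodic orbits in the disk forces `|a₁₀ + b₀₁| (3/2)^n ≤ 7 η`. The
orbits give distinct zeros `R 0` of the reduced displacement map `g z = (D z - z) / z` of the return
map `D`, while `g 0 = exp κ - 1` is of the order of the trace; `zero_count` applies to `g`. -/
theorem count_finset {d : ℕ} {v : CoefSpace d} (hd : 1 ≤ d) {η : ℝ} (hη : ‖v‖ * √d ≤ η)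
    (h1 : η ≤ 1 / (40 * π)) (S : Finset (Set (ℝ × ℝ)))
    (hS : ∀ Γ ∈ S, IsPeriodicOrbit (vecField d v) Γ ∧ Γ ⊆ halfDisk) :
    |proj d v 0 + proj d v 3| * (3 / 2) ^ S.card ≤ 7 * η := by
  have hη0 : 0 ≤ η := le_trans (by positivity) hη
  have hπ := Real.pi_gt_three
  have h40 : η ≤ 1 / 40 := h1.trans (by
    apply one_div_le_one_div_of_le (by norm_num); linarith)
  have hηπ : η * π ≤ 1 / 40 := by
    rw [le_div_iff₀ (by positivity)] at h1
    linarith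
  have hη1 : η < 1 := by linarith
  have hLT : η / (1 - η) * (2 * π) ≤ 1 / 8 := by
    rw [div_mul_eq_mul_div, div_le_iff₀ (by linarith)]
    nlinarith
  have hLT' : η / (1 - η) * (2 * π) ≤ 7 * η := by
    rw [div_mul_eq_mul_div, div_le_iff₀ (by linarith)]
    nlinarith [Real.pi_lt_d2]
  have hL0 : 0 ≤ η / (1 - η) := div_nonneg hη0 (by linarith)
  obtain ⟨K, hK⟩ := polarField_lipschitz hη hη1
  obtain ⟨D, hD, hD', hDn, hD0, hDρ⟩ := flow_holo (f := polarField d v) (T := 2 * π)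
    (by positivity) (K := K) (L := ⟨η / (1 - η), hL0⟩) (fun t _ => hK t)
    (fun q hq => (polarField_contDiffAt hη hη1
      (by simpa using hq.2)).continuousAt.continuousWithinAt)
    (fun t _ x hx => polarField_norm_le hη hη1 t (by simpa using hx)) hLT
    (fun t _ => polarField_differentiableOn hη hη1 t) (fun t => by simp [polarField])
  obtain ⟨κ, hκ, hκ1, hκ2⟩ := multiplier_real hd hη h40
  rw [hκ] at hD'
  set g : ℂ → ℂ := dslope (fun z => D z - z) 0 with hg
  have hgd : DifferentiableOn ℂ g (ball 0 (7 / 8)) :=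
    (Complex.differentiableOn_dslope (ball_mem_nhds _ (by norm_num))).2
      (hD.sub differentiableOn_id)
  have hg0 : g 0 = ((Real.exp κ - 1 : ℝ) : ℂ) := by
    rw [hg, dslope_same]
    refine (hD'.sub (hasDerivAt_id 0)).deriv.trans ?_
    push_cast
    rfl
  have hgz : ∀ z, z ≠ 0 → g z = (D z - z) / z := fun z hz => by
    rw [hg, dslope_of_ne _ hz, slope_def_field, hD0]
    simp
  have hg0' : 2 * |proj d v 0 + proj d v 3| ≤ ‖g 0‖ := by
    rw [hg0, Complex.norm_real]
    have hκ8 : |κ| ≤ 1 / 8 := hκ2.trans hLT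
    have := Real.norm_exp_sub_one_sub_id_le (x := κ) (by rw [Real.norm_eq_abs]; linarith)
    have h3 := norm_sub_norm_le κ (-(Real.exp κ - 1 - κ))
    rw [sub_neg_eq_add, norm_neg, add_sub_cancel] at h3
    rw [Real.norm_eq_abs κ] at h3 this
    nlinarith [abs_nonneg κ]
  choose! R hR1 hR2 hR3 hR4 using fun Γ hΓ =>
    periodic_polar hη (by linarith) (hS Γ hΓ).1 (hS Γ hΓ).2
  have hinj : Set.InjOn (fun Γ => (R Γ 0 : ℂ)) S := by
    intro Γ hΓ Γ' hΓ' h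
    have h : R Γ 0 = R Γ' 0 := Complex.ofReal_injective h
    exact orbit_inj (hS Γ hΓ).1 (hS Γ hΓ).2 (hS Γ' hΓ').1 (hS Γ' hΓ').2 (hR4 Γ hΓ)
      (by rw [h]; exact hR4 Γ' hΓ')
  have hmem : ∀ Γ ∈ S, ∀ t, ‖(R Γ t : ℂ)‖ ≤ 1 / 2 := fun Γ hΓ t => by
    rw [Complex.norm_real, Real.norm_eq_abs, abs_of_pos (hR1 Γ hΓ t).1]
    exact (hR1 Γ hΓ t).2
  have hz := zero_count (S.image fun Γ => (R Γ 0 : ℂ)) g (7 * η * (4 / 3)) hgd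
    (fun z hz => by
      have hz0 : z ≠ 0 := by rintro rfl; norm_num at hz
      rw [hgz z hz0, norm_div, hz, div_le_iff₀ (by norm_num)]
      have := (hDn z (by rw [mem_ball_zero_iff, hz]; norm_num)).trans hLT'
      linarith)
    (fun z hz => by
      obtain ⟨Γ, hΓ, rfl⟩ := Finset.mem_image.1 hz
      refine ⟨hmem Γ hΓ 0, ?_⟩
      have hne : (R Γ 0 : ℂ) ≠ 0 := by exact_mod_cast (hR1 Γ hΓ 0).1.ne'
      have hfix := hDρ (fun t => (R Γ t : ℂ)) (fun t _ =>
        ⟨(hR2 Γ hΓ t).hasDerivWithinAt, by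
          rw [mem_closedBall_zero_iff]; linarith [hmem Γ hΓ t]⟩)
        (by rw [mem_ball_zero_iff]; linarith [hmem Γ hΓ 0])
      rw [hgz _ hne, hfix, hR3 Γ hΓ, sub_self, zero_div])
  rw [Finset.card_image_of_injOn hinj] at hz
  have hpow : (0:ℝ) < (3 / 2) ^ S.card := by positivity
  nlinarith [mul_le_mul_of_nonneg_right hg0' hpow.le]

/-- The number of limit cycles is at most the number of slabs `|a₁₀ + b₀₁| ≤ 7 η (2/3)^j`,
`j = 0, 1, …`, that contain `v`. Both sides may be infinite (on the hyperplane of trace zero), so the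
estimate is proved for every finite lower bound of the count. -/
theorem limitCycleCount_le {d : ℕ} {v : CoefSpace d} (hd : 1 ≤ d) {η : ℝ} (hη : ‖v‖ * √d ≤ η)
    (h1 : η ≤ 1 / (40 * π)) :
    limitCycleCount d v ≤ ∑' j : ℕ, Set.indicator
      {w : CoefSpace d | |proj d w 0 + proj d w 3| ≤ 7 * η * (2 / 3) ^ j} 1 v := by
  have hη0 : 0 ≤ η := le_trans (by positivity) hη
  set 𝒞 := {Γ : Set (ℝ × ℝ) | IsLimitCycle (vecField d v) Γ ∧
      Γ ⊆ {q : ℝ × ℝ | q.1 ^ 2 + q.2 ^ 2 ≤ 1 / 4}} with h𝒞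
  have key : ∀ n : ℕ, (n : ℕ∞) ≤ 𝒞.encard → (n : ℝ≥0∞) ≤ ∑' j : ℕ, Set.indicator
      {w : CoefSpace d | |proj d w 0 + proj d w 3| ≤ 7 * η * (2 / 3) ^ j} 1 v := by
    intro n hn
    obtain ⟨S, hS, hSn⟩ := Set.exists_subset_encard_eq hn
    have hfin : S.Finite := Set.finite_of_encard_eq_coe hSn
    have hcard : hfin.toFinset.card = n := by
      rw [hfin.encard_eq_coe_toFinset_card] at hSn
      exact_mod_cast hSn
    have h := count_finset hd hη h1 hfin.toFinset fun Γ hΓ => by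
      have := hS (hfin.mem_toFinset.1 hΓ)
      exact ⟨this.1.1, this.2⟩
    rw [hcard] at h
    refine le_trans ?_ (ENNReal.sum_le_tsum (Finset.range n))
    rw [Finset.sum_eq_card_nsmul (b := 1) fun j hj => ?_]
    · simp
    · refine Set.indicator_of_mem ?_ _
      have h2 : (2 / 3 : ℝ) ^ n ≤ (2 / 3) ^ j :=
        pow_le_pow_of_le_one (by norm_num) (by norm_num) (Finset.mem_range.1 hj).le
      have h3 : (2 / 3 : ℝ) ^ n * (3 / 2) ^ n = 1 := by rw [← mul_pow]; norm_num
      calc |proj d v 0 + proj d v 3|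
          = |proj d v 0 + proj d v 3| * (3 / 2) ^ n * (2 / 3) ^ n := by
            rw [mul_assoc, mul_comm ((3 / 2 : ℝ) ^ n), h3, mul_one]
        _ ≤ 7 * η * (2 / 3) ^ n := by gcongr
        _ ≤ 7 * η * (2 / 3) ^ j := by gcongr
  change ((𝒞.encard : ℕ∞) : ℝ≥0∞) ≤ _
  rcases eq_or_ne 𝒞.encard ⊤ with h | h
  · rw [h]
    refine (top_le_iff.2 (ENNReal.eq_top_of_forall_nnreal_le fun r => ?_)).trans' le_top
    obtain ⟨n, hn⟩ := exists_nat_ge r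
    exact le_trans (by exact_mod_cast hn) (key n (by rw [h]; exact le_top))
  · lift 𝒞.encard to ℕ using h with n hn
    exact key n le_rfl

/-! ### Averaging over a convex set of coefficients -/

/-- The trace of the linear part is a continuous linear form in the coefficients. -/
theorem exists_traceForm {d : ℕ} (hd : 1 ≤ d) :
    ∃ ℓ : CoefSpace d →L[ℝ] ℝ, ∀ w, ℓ w = proj d w 0 + proj d w 3 := by
  have m1 : ((0, 1) : ℕ × ℕ) ∈ coeffIdx d := mem_coeffIdx.2 (by simpa using hd)
  have m2 : ((1, 0) : ℕ × ℕ) ∈ coeffIdx d := mem_coeffIdx.2 (by simpa using hd)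
  exact ⟨EuclideanSpace.proj (Sum.inl ⟨(0, 1), m1⟩) + EuclideanSpace.proj (Sum.inr ⟨(1, 0), m2⟩),
    fun w => by simp [proj, hd]⟩

theorem norm_proj_le {d : ℕ} (v : CoefSpace d) : ‖proj d v‖ ≤ ‖v‖ := by
  by_cases hd : 1 ≤ d
  swap
  · simp [proj, hd]
  have m1 : ((0, 1) : ℕ × ℕ) ∈ coeffIdx d := mem_coeffIdx.2 (by simpa using hd)
  have m2 : ((1, 0) : ℕ × ℕ) ∈ coeffIdx d := mem_coeffIdx.2 (by simpa using hd)
  have hne : (⟨(0, 1), m1⟩ : ↥(coeffIdx d)) ≠ ⟨(1, 0), m2⟩ := by simp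
  have hpair : ∀ f : ↥(coeffIdx d) → ℝ, (∀ p, 0 ≤ f p) →
      f ⟨(0, 1), m1⟩ + f ⟨(1, 0), m2⟩ ≤ ∑ p, f p := fun f hf => by
    rw [← Finset.sum_pair hne]
    exact Finset.sum_le_sum_of_subset_of_nonneg (Finset.subset_univ _) fun p _ _ => hf p
  have hsq : ‖proj d v‖ ^ 2 ≤ ‖v‖ ^ 2 := by
    rw [EuclideanSpace.norm_sq_eq, EuclideanSpace.norm_sq_eq, Fintype.sum_sum_type,
      Fin.sum_univ_four]
    have e1 := hpair (fun p => ‖v (Sum.inl p)‖ ^ 2) fun p => sq_nonneg _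
    have e2 := hpair (fun p => ‖v (Sum.inr p)‖ ^ 2) fun p => sq_nonneg _
    simp only [proj, hd, dite_true]
    simp
    simp at e1 e2
    linarith
  exact (pow_le_pow_iff_left₀ (norm_nonneg _) (norm_nonneg _) two_ne_zero).1 hsq

/-- The volume hypothesis provides a point of `V` with trace of size at least `N / (40 δ)`:
otherwise `π(V)` lies in a thin slab of the four-dimensional ball, which by `slab_measure` has at
most the fraction `1 / (2 δ)` of its volume. -/
theorem exists_trace_large {d : ℕ} {N δ : ℝ} (hN : 0 < N) (hδ : 1 ≤ δ) {V : Set (CoefSpace d)}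
    (hV : V ⊆ ball 0 N) (hpos : 0 < volume (proj d '' V))
    (hvol : volume (ball (0 : EuclideanSpace ℝ (Fin 4)) N)
      ≤ ENNReal.ofReal δ * volume (proj d '' V)) :
    ∃ p ∈ V, N / (40 * δ) < |proj d p 0 + proj d p 3| := by
  by_contra! h
  set W := proj d '' V with hW
  set ℓ : EuclideanSpace ℝ (Fin 4) →L[ℝ] ℝ := EuclideanSpace.proj 0 + EuclideanSpace.proj 3
  have hWsub : W ⊆ {w | |ℓ w| ≤ N / (40 * δ)} ∩ ball 0 N := by
    rintro _ ⟨p, hp, rfl⟩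
    refine ⟨h p hp, ?_⟩
    rw [mem_ball_zero_iff]
    exact (norm_proj_le p).trans_lt (mem_ball_zero_iff.1 (hV hp))
  have hp4 : EuclideanSpace.single (0 : Fin 4) (N / 2) ∈ ball (0 : EuclideanSpace ℝ (Fin 4)) N := by
    rw [mem_ball_zero_iff, PiLp.norm_single, Real.norm_eq_abs, abs_of_pos (by linarith)]
    linarith
  have hℓ : ℓ (EuclideanSpace.single (0 : Fin 4) (N / 2)) = N / 2 := by
    simp [ℓ]
  have hslab := slab_measure (volume : Measure (EuclideanSpace ℝ (Fin 4))) 4 (fun p q hq S => by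
    rw [Measure.addHaar_image_homothety, finrank_euclideanSpace_fin, abs_of_pos (by positivity)])
    ℓ (convex_ball 0 N) hp4 (ε := N / (40 * δ)) (by positivity) (by rw [hℓ]; positivity)
  rw [hℓ, abs_of_pos (by positivity)] at hslab
  have hfin : volume W ≠ ⊤ :=
    ne_top_of_le_ne_top measure_ball_lt_top.ne (measure_mono (hWsub.trans Set.inter_subset_right))
  have hle : volume W ≤ ENNReal.ofReal (1 / 2) * volume W := by
    calc volume W ≤ _ := measure_mono hWsub
      _ ≤ _ := hslab
      _ ≤ ENNReal.ofReal (2 * ((4 : ℕ) + 1) * (N / (40 * δ)) / (N / 2)) *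
          (ENNReal.ofReal δ * volume W) := by gcongr
      _ = ENNReal.ofReal (1 / 2) * volume W := by
        rw [← mul_assoc, ← ENNReal.ofReal_mul (by positivity)]
        congr 2
        push_cast
        field_simp
        norm_num
  have hlt : ENNReal.ofReal (1 / 2) * volume W < 1 * volume W :=
    ENNReal.mul_lt_mul_left hpos.ne' hfin (by rw [ENNReal.ofReal_lt_one]; norm_num)
  rw [one_mul] at hlt
  exact absurd hle (not_le.2 hlt)

/-- The number `J` of slabs after which the geometric decay sets in is of order
`log δ + log d`. -/
theorem exists_exponent {d k : ℕ} (hd : 2 ≤ d) (hk : k ≤ 2 * (d + 1) ^ 2) {δ : ℝ} (hδ : 1 ≤ δ) :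
    ∃ J : ℕ, 560 * (k + 1) * √d * δ ≤ (3 / 2) ^ J ∧
      (J : ℝ) + 3 ≤ 54 * (Real.log δ + Real.log d) := by
  have hd' : (2:ℝ) ≤ d := by exact_mod_cast hd
  have hd0 : (0:ℝ) < d := by linarith
  have hlogd : Real.log 2 ≤ Real.log d := Real.log_le_log (by norm_num) hd'
  have hlogδ : 0 ≤ Real.log δ := Real.log_nonneg hδ
  have hlog2 := Real.log_two_gt_d9
  set B : ℝ := 2 ^ 13 * d ^ 3 * δ with hB
  have hB0 : 0 < B := by positivity
  have hlogB : Real.log B = 13 * Real.log 2 + 3 * Real.log d + Real.log δ := by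
    rw [hB, Real.log_mul (by positivity) (by positivity), Real.log_mul (by positivity)
      (by positivity), Real.log_pow, Real.log_pow]
    push_cast
    ring
  refine ⟨⌈3 * Real.log B⌉₊, ?_, ?_⟩
  · have hexp : Real.exp (1 / 3) ≤ 3 / 2 := by
      have h3 : Real.exp (1 / 3) ^ 3 ≤ (3 / 2) ^ 3 := by
        rw [← Real.exp_nat_mul]
        norm_num
        linarith [Real.exp_one_lt_d9]
      exact (pow_le_pow_iff_left₀ (Real.exp_pos _).le (by norm_num) three_ne_zero).1 h3
    have hsqrt : √(d:ℝ) ≤ d := by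
      rw [Real.sqrt_le_left hd0.le]
      nlinarith
    have hk' : (k:ℝ) ≤ 2 * (d + 1) ^ 2 := by exact_mod_cast hk
    have hk9 : (k:ℝ) + 1 ≤ 9 * d ^ 2 := by nlinarith
    calc 560 * (k + 1) * √d * δ ≤ 560 * (9 * d ^ 2) * d * δ := by gcongr
      _ ≤ B := by
        have : 0 < (d:ℝ) ^ 3 * δ := by positivity
        rw [hB]
        nlinarith
      _ = Real.exp (1 / 3 * (3 * Real.log B)) := by
        rw [← mul_assoc, one_div_mul_cancel (by norm_num), one_mul, Real.exp_log hB0]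
      _ ≤ Real.exp (⌈3 * Real.log B⌉₊ * (1 / 3)) := by
        rw [mul_comm]
        gcongr
        exact Nat.le_ceil _
      _ = Real.exp (1 / 3) ^ ⌈3 * Real.log B⌉₊ := Real.exp_nat_mul _ _
      _ ≤ _ := by gcongr
  · have := Nat.ceil_lt_add_one (a := 3 * Real.log B) (by
      rw [hlogB]; linarith)
    rw [hlogB] at this ⊢
    linarith

/-- there is an absolute constant `c > 0` such that under the hypotheses of
the tail bound for convex sets (`d ≥ 2`, `N ≤ 1/(40π√d)`, `V ⊆ E(s,N)` convex of real
dimension `k`, `|E(4,N)| ≤ δ |π(V)|` with `δ ≥ 1`), the average number of limit cycles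
over `V` (w.r.t. `k`-dimensional Hausdorff measure) is at most `c (log δ + log d)`. -/
theorem statement4 :
    ∃ c : ℝ, 0 < c ∧
      ∀ d : ℕ, 2 ≤ d → ∀ N : ℝ, N ≤ 1 / (40 * π * Real.sqrt d) →
      ∀ V : Set (CoefSpace d), Convex ℝ V → V ⊆ ball 0 N →
      ∀ k : ℕ, Module.finrank ℝ ↥(vectorSpan ℝ V) = k →
      ∀ δ : ℝ, 1 ≤ δ →
        0 < volume (proj d '' V) →
        volume (ball (0 : EuclideanSpace ℝ (Fin 4)) N)
          ≤ ENNReal.ofReal δ * volume (proj d '' V) →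
        ∫⁻ v in V, limitCycleCount d v ∂(μH[k])
          ≤ ENNReal.ofReal (c * (Real.log δ + Real.log d)) * μH[k] V := by
  refine ⟨54, by norm_num, fun d hd N hN V hV hVN k hk δ hδ hpos hvol => ?_⟩
  have hd1 : 1 ≤ d := by omega
  have hsd : 0 < √(d:ℝ) := Real.sqrt_pos.2 (by exact_mod_cast hd1)
  have hN0 : 0 < N := by
    by_contra! h
    rw [ball_eq_empty.2 h, Set.subset_empty_iff] at hVN
    simp [hVN] at hpos
  obtain ⟨ℓ, hℓ⟩ := exists_traceForm hd1
  obtain ⟨p, hp, hpt⟩ := exists_trace_large hN0 hδ hVN hpos hvol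
  rw [← hℓ] at hpt
  have hℓp : 0 < |ℓ p| := lt_trans (by positivity) hpt
  have hkd : k ≤ 2 * (d + 1) ^ 2 := by
    have hcard : (coeffIdx d).card ≤ (d + 1) ^ 2 := by
      refine (Finset.card_filter_le _ _).trans ?_
      simp [sq]
    have := Submodule.finrank_le (vectorSpan ℝ V)
    rw [hk, finrank_euclideanSpace, Fintype.card_sum, Fintype.card_coe] at this
    omega
  obtain ⟨J, hJ, hJlog⟩ := exists_exponent hd hkd hδ
  have hη : N * √d ≤ 1 / (40 * π) := by
    calc N * √d ≤ 1 / (40 * π * √d) * √d := by gcongr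
      _ = 1 / (40 * π) := by field_simp
  -- Hausdorff measure `μH[k]` scales by `q ^ k` under homotheties
  have hmain := count_integral (μH[k] : Measure (CoefSpace d)) k (fun q r hr S => by
      rw [hausdorffMeasure_homothety_image (Nat.cast_nonneg k) q hr.ne', ENNReal.smul_def,
        NNReal.rpow_natCast, smul_eq_mul, ENNReal.ofReal_pow hr.le, ENNReal.coe_pow,
        Real.nnnorm_of_nonneg hr.le]
      congr 2
      exact (ENNReal.ofReal_eq_coe_nnreal hr.le).symm)
    ℓ hV hp (abs_pos.1 hℓp) (A := 7 * (N * √d)) (by positivity) (C := limitCycleCount d)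
    (fun v hv => by
      have hvη : ‖v‖ * √d ≤ N * √d := by
        have := (mem_ball_zero_iff.1 (hVN hv)).le
        gcongr
      simpa only [hℓ] using limitCycleCount_le hd1 hvη hη)
    (J := J) (by
      refine le_trans ?_ hJ
      rw [div_le_iff₀ hℓp]
      calc 2 * ((k:ℝ) + 1) * (7 * (N * √d)) = 560 * (k + 1) * √d * δ * (N / (40 * δ)) := by
            field_simp; norm_num
        _ ≤ _ := by gcongr)
  refine hmain.trans ?_
  gcongr
  rw [show ((J : ℝ≥0∞) + 3) = ENNReal.ofReal ((J:ℝ) + 3) by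
    rw [ENNReal.ofReal_add (by positivity) (by norm_num)]; simp]
  exact ENNReal.ofReal_le_ofReal hJlog
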